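/- (Integral Bailey lemma) Let p, q be complex numbers with 0 < |p| < 1, 0 < |q| < 1, fix a square root √(pq), and let s, t, y, w be nonzero complex numbers with |t| < 1, |s| < 1, |√(pq)(st)^{−1}y| < 1, |√(pq)(st)^{−1}y^{−1}| < 1, |sw| < 1, |sw^{−1}| < 1, |stw| < 1, |stw^{−1}| < 1. Let α : ℂ → ℂ be continuous on the unit circle, and define β(x) := ((p;p)_∞(q;q)_∞/(4πi)) ∮_{|z|=1} [Γ(t x^{±1} z^{±1};p,q)/(Γ(t²;p,q)·Γ(z²;p,q)Γ(z^{−2};p,q))] α(z) dz/z for x on the unit circle, and α′(z) := D(s;y,z)·α(z). Then D(t^{−1};y,w) · ((p;p)_∞(q;q)_∞/(4πi)) ∮_{|x|=1} [Γ(s w^{±1} x^{±1};p,q)/(Γ(s²;p,q)·Γ(x²;p,q)Γ(x^{−2};p,q))] · D(st;y,x) · β(x) dx/x = ((p;p)_∞(q;q)_∞/(4πi)) ∮_{|z|=1} [Γ(st w^{±1} z^{±1};p,q)/(Γ(s²t²;p,q)·Γ(z²;p,q)Γ(z^{−2};p,q))] α′(z) dz/z, where Γ(a u^{±1} v^{±1};p,q)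 denotes the product of the four elliptic gamma functions with all sign choices and all integrals are over the positively oriented unit circle. -/

import Mathlib

open Complex Real Filter Topology

/-- The infinite q-Pochhammer symbol (z;q)_inf. -/
noncomputable def qpoch (z q : ℂ) : ℂ := ∏' j : ℕ, (1 - z * q ^ j)

/-- The elliptic gamma function Γ(z;p,q). -/
noncomputable def egamma (z p q : ℂ) : ℂ :=
  ∏' jk : ℕ × ℕ, (1 - z⁻¹ * p ^ (jk.1 + 1) * q ^ (jk.2 + 1)) / (1 - z * p ^ jk.1 * q ^ jk.2)

/-- The short Jacobi theta function θ(z;p) (base first argument). -/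
noncomputable def theta (p z : ℂ) : ℂ := qpoch z p * qpoch (p * z⁻¹) p

/-- D(s;y,w) built from four elliptic gamma functions; `r` is a fixed square root of `p*q`. -/
noncomputable def Dfun (p q r s y w : ℂ) : ℂ :=
  egamma (r * s⁻¹ * y * w) p q * egamma (r * s⁻¹ * y * w⁻¹) p q *
    egamma (r * s⁻¹ * y⁻¹ * w) p q * egamma (r * s⁻¹ * y⁻¹ * w⁻¹) p q

/-- Γ(a u^{±1} v^{±1};p,q): the product of the four elliptic gamma functions. -/
noncomputable def gamma4 (p q a u v : ℂ) : ℂ :=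
  egamma (a * u * v) p q * egamma (a * u * v⁻¹) p q *
    egamma (a * u⁻¹ * v) p q * egamma (a * u⁻¹ * v⁻¹) p q

/-- The constant κ = (p;p)_∞ (q;q)_∞ / (4πi). -/
noncomputable def kappa (p q : ℂ) : ℂ := qpoch p p * qpoch q q / (4 * (Real.pi : ℂ) * Complex.I)

/-!
By Fubini the Bailey lemma reduces to the star-triangle relation for the kernel of the elliptic
Fourier transform, which is Spiridonov's elliptic beta integral at special parameters combined with
the reflection formula `Γ(z) Γ(p q / z) = 1`.

To evaluate the beta integral, divide it by the product `∏_{i<j} Γ(tᵢ tⱼ)`. A six-term theta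
function identity shows that the integrands at two parameter points differing by `tᵢ ↦ q tᵢ`,
`tⱼ ↦ tⱼ / q` have, after normalization, a difference of the form `h(z / q) - h(z)`, whose integral
vanishes. So as a function of `tᵢ` the ratio is analytic and invariant under `tᵢ ↦ q tᵢ` on an
annulus wider than `‖q‖ < ‖tᵢ‖ < 1`, hence constant there, and by the identity theorem it is
constant on all balanced parameters. Its value is found by pinching the contour at `z = ±I`, where
the integrand becomes a Poisson kernel times a continuous function.
-/

section EulerProducts

variable {ι : Type*} {a : ι → ℂ} {p q z : ℂ}

/-- The entire function `z ↦ ∏ᵢ (1 - z aᵢ)` attached to a summable family `a`; it covers both the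
`q`-Pochhammer symbol and the double product in the denominator of the elliptic gamma function. -/
noncomputable def eulerProd (a : ι → ℂ) (z : ℂ) : ℂ := ∏' i, (1 - z * a i)

/-- The double `q`-Pochhammer symbol `(z;p,q)_∞ = ∏ (1 - z pʲ qᵏ)`. -/
noncomputable def qpochPair (p q z : ℂ) : ℂ := eulerProd (fun j : ℕ × ℕ => p ^ j.1 * q ^ j.2) z

lemma multipliable_eulerProd (ha : Summable fun i => ‖a i‖) (z : ℂ) :
    Multipliable fun i => 1 - z * a i := by
  simpa only [sub_eq_add_neg] using multipliable_one_add_of_summable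
    (f := fun i => -(z * a i)) (by simpa only [norm_neg, norm_mul] using ha.mul_left ‖z‖)

lemma eulerProd_ne_zero (ha : Summable fun i => ‖a i‖) (ha1 : ∀ i, ‖a i‖ ≤ 1) (hz : ‖z‖ < 1) :
    eulerProd a z ≠ 0 := by
  have factor_ne_zero (i : ι) : 1 - z * a i ≠ 0 := by
    refine (isUnit_one_sub_of_norm_lt_one ?_).ne_zero
    rw [norm_mul]
    exact mul_lt_one_of_nonneg_of_lt_one_left (norm_nonneg _) hz (ha1 i)
  simpa only [eulerProd, sub_eq_add_neg] using tprod_one_add_ne_zero_of_summable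
    (f := fun i => -(z * a i)) (by simpa only [sub_eq_add_neg] using factor_ne_zero)
    (by simpa only [norm_neg, norm_mul] using ha.mul_left ‖z‖)

lemma differentiable_eulerProd (ha : Summable fun i => ‖a i‖) :
    Differentiable ℂ (eulerProd a) := by
  intro z
  have locally_uniform := Summable.hasProdLocallyUniformlyOn_one_add (f := fun i x => -(x * a i))
    (K := Metric.ball (0 : ℂ) (‖z‖ + 1)) Metric.isOpen_ball
    (u := fun i => (‖z‖ + 1) * ‖a i‖) (ha.mul_left _)
    (Eventually.of_forall fun i x hx => by
      rw [norm_neg, norm_mul]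
      gcongr
      simpa using (mem_ball_zero_iff.1 hx).le) (fun i => by fun_prop)
  have differentiableOn := locally_uniform.differentiableOn
    (.of_forall fun _ => by
      simpa [Finset.prod_fn] using DifferentiableOn.finsetProd (fun _ _ => by fun_prop))
    Metric.isOpen_ball
  simpa only [eulerProd, sub_eq_add_neg] using!
    differentiableOn.differentiableAt (x := z) (Metric.isOpen_ball.mem_nhds (by simp))

lemma summable_norm_pow (hq : ‖q‖ < 1) : Summable fun j : ℕ => ‖q ^ j‖ := by
  simpa using summable_geometric_of_lt_one (norm_nonneg q) hq

lemma summable_norm_pow_mul_pow (hp : ‖p‖ < 1) (hq : ‖q‖ < 1) :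
    Summable fun j : ℕ × ℕ => ‖p ^ j.1 * q ^ j.2‖ := by
  simpa using (summable_norm_pow hp).mul_of_nonneg (summable_norm_pow hq)
    (fun _ => norm_nonneg _) (fun _ => norm_nonneg _)

lemma differentiable_qpoch (hq : ‖q‖ < 1) : Differentiable ℂ fun z => qpoch z q :=
  differentiable_eulerProd (summable_norm_pow hq)

lemma differentiable_qpochPair (hp : ‖p‖ < 1) (hq : ‖q‖ < 1) : Differentiable ℂ (qpochPair p q) :=
  differentiable_eulerProd (summable_norm_pow_mul_pow hp hq)

lemma qpoch_ne_zero (hq : ‖q‖ < 1) (hz : ‖z‖ < 1) : qpoch z q ≠ 0 :=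
  eulerProd_ne_zero (summable_norm_pow hq)
    (fun j => by simpa using pow_le_one₀ (norm_nonneg q) hq.le) hz

lemma qpochPair_ne_zero (hp : ‖p‖ < 1) (hq : ‖q‖ < 1) (hz : ‖z‖ < 1) : qpochPair p q z ≠ 0 :=
  eulerProd_ne_zero (summable_norm_pow_mul_pow hp hq)
    (fun j => by
      rw [norm_mul, norm_pow, norm_pow]
      exact mul_le_one₀ (pow_le_one₀ (norm_nonneg p) hp.le) (by positivity)
        (pow_le_one₀ (norm_nonneg q) hq.le)) hz

lemma qpoch_eq_one_sub_mul (hq : ‖q‖ < 1) (z : ℂ) : qpoch z q = (1 - z) * qpoch (q * z) q := by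
  have reindex (j : ℕ) : 1 - q * z * q ^ j = 1 - z * q ^ (j + 1) := by ring
  unfold qpoch
  rw [tprod_eq_zero_mul'
    ((multipliable_eulerProd (summable_norm_pow hq) (q * z)).congr reindex)]
  simp only [pow_zero, mul_one, reindex]

lemma qpochPair_comm (p q z : ℂ) : qpochPair p q z = qpochPair q p z := by
  unfold qpochPair eulerProd
  rw [← (Equiv.prodComm ℕ ℕ).tprod_eq]
  simp only [Equiv.prodComm_apply, Prod.fst_swap, Prod.snd_swap, mul_comm]

lemma hasProd_qpoch_mul_pow (hp : ‖p‖ < 1) (hq : ‖q‖ < 1) (z : ℂ) :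
    HasProd (fun j : ℕ => qpoch (z * p ^ j) q) (qpochPair p q z) := by
  refine (multipliable_eulerProd (summable_norm_pow_mul_pow hp hq) z).hasProd.prod_fiberwise
    fun j => ?_
  simpa only [mul_assoc, qpoch] using
    (multipliable_eulerProd (summable_norm_pow hq) (z * p ^ j)).hasProd

lemma qpochPair_eq_qpoch_mul_left (hp : ‖p‖ < 1) (hq : ‖q‖ < 1) (z : ℂ) :
    qpochPair p q z = qpoch z q * qpochPair p q (p * z) := by
  have reindex (j : ℕ) : qpoch (p * z * p ^ j) q = qpoch (z * p ^ (j + 1)) q := by ring_nf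
  have tail := hasProd_qpoch_mul_pow hp hq (p * z)
  rw [← (hasProd_qpoch_mul_pow hp hq z).tprod_eq, ← tail.tprod_eq,
    tprod_eq_zero_mul' (tail.multipliable.congr reindex)]
  simp only [pow_zero, mul_one, reindex]

lemma qpochPair_eq_qpoch_mul_right (hp : ‖p‖ < 1) (hq : ‖q‖ < 1) (z : ℂ) :
    qpochPair p q z = qpoch z p * qpochPair p q (q * z) := by
  rw [qpochPair_comm, qpochPair_eq_qpoch_mul_left hq hp, qpochPair_comm]

end EulerProducts

section ThetaGamma

variable {p q z : ℂ}

lemma differentiableAt_theta (hp : ‖p‖ < 1) (hz : z ≠ 0) : DifferentiableAt ℂ (theta p) z :=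
  (differentiable_qpoch hp z).mul
    ((differentiable_qpoch hp _).fun_comp' z (by fun_prop (disch := exact hz)))

lemma theta_one (hp : ‖p‖ < 1) : theta p 1 = 0 := by
  rw [theta, qpoch_eq_one_sub_mul hp, sub_self, zero_mul, zero_mul]

lemma theta_mul_left (hp : ‖p‖ < 1) (hp0 : p ≠ 0) (hz : z ≠ 0) :
    theta p (p * z) = -z⁻¹ * theta p z := by
  have h : p * (p * z)⁻¹ = z⁻¹ := by field_simp
  rw [theta, theta, h, qpoch_eq_one_sub_mul hp z⁻¹, qpoch_eq_one_sub_mul hp z]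
  field_simp
  ring

lemma theta_inv (hp : ‖p‖ < 1) (hz : z ≠ 0) : theta p z⁻¹ = -z⁻¹ * theta p z := by
  rw [theta, theta, inv_inv, qpoch_eq_one_sub_mul hp z⁻¹, qpoch_eq_one_sub_mul hp z]
  field_simp
  ring

lemma theta_ne_zero (hp : ‖p‖ < 1) (hpz : ‖p‖ < ‖z‖) (hz : ‖z‖ < 1) : theta p z ≠ 0 := by
  refine mul_ne_zero (qpoch_ne_zero hp hz) (qpoch_ne_zero hp ?_)
  rwa [norm_mul, norm_inv, ← div_eq_mul_inv, div_lt_one ((norm_nonneg p).trans_lt hpz)]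

lemma egamma_eq_div (hp : ‖p‖ < 1) (hq : ‖q‖ < 1) (hz : qpochPair p q z ≠ 0) :
    egamma z p q = qpochPair p q (p * q / z) / qpochPair p q z := by
  have multipliable (x : ℂ) := multipliable_eulerProd (summable_norm_pow_mul_pow hp hq) x
  refine Eq.trans (tprod_congr fun j => ?_)
    ((multipliable (p * q / z)).hasProd.div₀ (multipliable z).hasProd hz).tprod_eq
  congr 1 <;> ring

lemma egamma_one (p q : ℂ) : egamma 1 p q = 0 :=
  tprod_of_exists_eq_zero ⟨(0, 0), by simp⟩

lemma egamma_mul_left (hp : ‖p‖ < 1) (hq : ‖q‖ < 1) (hq0 : q ≠ 0) (hz0 : z ≠ 0) (hz : ‖z‖ < 1) :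
    egamma (q * z) p q = theta p z * egamma z p q := by
  have hqz : ‖q * z‖ < 1 := by
    rw [norm_mul]; exact mul_lt_one_of_nonneg_of_lt_one_left (norm_nonneg q) hq hz.le
  have hz_ne := qpochPair_ne_zero hp hq hz
  have hqz_ne := qpochPair_ne_zero hp hq hqz
  have hz_poch := qpoch_ne_zero hp hz
  have cancel : p * q / (q * z) = p / z := by field_simp
  rw [egamma_eq_div hp hq hz_ne, egamma_eq_div hp hq hqz_ne, cancel,
    qpochPair_eq_qpoch_mul_right hp hq (p / z), qpochPair_eq_qpoch_mul_right hp hq z, theta,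
    ← div_eq_mul_inv, mul_div_left_comm q p z, ← mul_div_assoc p q z]
  field_simp

lemma egamma_mul_reflection (hp : ‖p‖ < 1) (hq : ‖q‖ < 1) (hp0 : p ≠ 0) (hq0 : q ≠ 0)
    (hz : ‖z‖ < 1) (hpqz : ‖p * q / z‖ < 1) :
    egamma z p q * egamma (p * q / z) p q = 1 := by
  have hz_ne := qpochPair_ne_zero hp hq hz
  have hpqz_ne := qpochPair_ne_zero hp hq hpqz
  rw [egamma_eq_div hp hq hz_ne, egamma_eq_div hp hq hpqz_ne,
    div_div_cancel₀ (mul_ne_zero hp0 hq0)]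
  field_simp

lemma egamma_ne_zero (hp : ‖p‖ < 1) (hq : ‖q‖ < 1) (hp0 : p ≠ 0) (hq0 : q ≠ 0)
    (hz : ‖z‖ < 1) (hpqz : ‖p * q‖ < ‖z‖) : egamma z p q ≠ 0 := by
  have hz0 := (norm_nonneg _).trans_lt hpqz
  refine left_ne_zero_of_mul_eq_one (egamma_mul_reflection hp hq hp0 hq0 hz ?_)
  rwa [norm_div, div_lt_one hz0]

lemma differentiableAt_egamma (hp : ‖p‖ < 1) (hq : ‖q‖ < 1) (hz0 : z ≠ 0) (hz : ‖z‖ < 1) :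
    DifferentiableAt ℂ (fun z => egamma z p q) z := by
  have hd := differentiable_qpochPair hp hq
  have quotient : DifferentiableAt ℂ (fun z => qpochPair p q (p * q / z) / qpochPair p q z) z :=
    ((hd _).fun_comp' z (by fun_prop (disch := exact hz0))).div (hd z) (qpochPair_ne_zero hp hq hz)
  refine quotient.congr_of_eventuallyEq ?_
  filter_upwards [continuous_norm.continuousAt.eventually_lt_const hz] with x hx
  exact egamma_eq_div hp hq (qpochPair_ne_zero hp hq hx)

lemma egamma_mul_egamma_inv_of_norm_eq_one (hp : ‖p‖ < 1) (hq : ‖q‖ < 1) (hz : ‖z‖ = 1) :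
    (egamma z p q * egamma z⁻¹ p q)⁻¹ = theta p z * theta q z⁻¹ := by
  rcases eq_or_ne z 1 with rfl | hz1
  · rw [egamma_one, theta_one hp, zero_mul, zero_mul, inv_zero]
  have expand (x : ℂ) :
      qpochPair p q x = qpoch x p * (qpoch (q * x) q * qpochPair p q (p * q * x)) := by
    rw [qpochPair_eq_qpoch_mul_right hp hq, qpochPair_eq_qpoch_mul_left hp hq, mul_assoc p]
  have expand' (x : ℂ) :
      qpochPair p q x = qpoch x q * (qpoch (p * x) p * qpochPair p q (p * q * x)) := by
    rw [qpochPair_eq_qpoch_mul_left hp hq, qpochPair_eq_qpoch_mul_right hp hq (p * x),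
      ← mul_assoc q, mul_comm q p]
  have norm_pq : ‖p * q‖ < 1 := by
    rw [norm_mul]; exact mul_lt_one_of_nonneg_of_lt_one_left (norm_nonneg p) hp hq.le
  have hz_inv : ‖z⁻¹‖ = 1 := by rw [norm_inv, hz, inv_one]
  have norm_mul_lt (c x : ℂ) (hc : ‖c‖ < 1) (hx : ‖x‖ = 1) : ‖c * x‖ < 1 := by
    rwa [norm_mul, hx, mul_one]
  have tail_ne_zero (x : ℂ) (hx : ‖x‖ = 1) : qpochPair p q (p * q * x) ≠ 0 :=
    qpochPair_ne_zero hp hq (norm_mul_lt _ x norm_pq hx)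
  have ne_zero (x : ℂ) (hx : ‖x‖ = 1) (hx1 : x ≠ 1) : qpochPair p q x ≠ 0 := by
    rw [expand, qpoch_eq_one_sub_mul hp]
    exact mul_ne_zero (mul_ne_zero (sub_ne_zero.2 hx1.symm)
      (qpoch_ne_zero hp (norm_mul_lt p x hp hx)))
      (mul_ne_zero (qpoch_ne_zero hq (norm_mul_lt q x hq hx)) (tail_ne_zero x hx))
  have tail := tail_ne_zero z hz
  have tail_inv := tail_ne_zero z⁻¹ hz_inv
  rw [egamma_eq_div hp hq (ne_zero z hz hz1),
    egamma_eq_div hp hq (ne_zero z⁻¹ hz_inv (inv_ne_one.2 hz1)), div_inv_eq_mul,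
    div_eq_mul_inv (p * q) z, expand z, expand' z⁻¹, theta, theta, inv_inv]
  generalize qpochPair p q (p * q * z) = T, qpochPair p q (p * q * z⁻¹) = T' at *
  field_simp

end ThetaGamma

section CircleAverages

variable {f : ℂ → ℂ}

lemma circleAverage_eq_of_differentiableAt {r R : ℝ} (hr : 0 < r) (hR : 0 < R)
    (hf : ∀ z : ℂ, ‖z‖ ∈ Set.uIcc r R → DifferentiableAt ℂ f z) :
    circleAverage f 0 r = circleAverage f 0 R := by
  wlog hrR : r ≤ R generalizing r R
  · exact (this hR hr (Set.uIcc_comm r R ▸ hf) (le_of_not_ge hrR)).symm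
  have differentiableAt (z : ℂ) (hrz : r ≤ ‖z‖) (hzR : ‖z‖ ≤ R) : DifferentiableAt ℂ f z :=
    hf z (Set.Icc_subset_uIcc ⟨hrz, hzR⟩)
  rw [circleAverage_eq_circleIntegral hr.ne', circleAverage_eq_circleIntegral hR.ne']
  congr 1
  refine (circleIntegral_sub_center_inv_smul_eq_of_differentiable_on_annulus_off_countable hr hrR
    Set.countable_empty ?_ ?_).symm
  · rintro z ⟨hzR, hrz⟩
    exact (differentiableAt z (by simpa using hrz)
      (by simpa using hzR)).continuousAt.continuousWithinAt
  · rintro z ⟨⟨hzR, hrz⟩, -⟩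
    exact differentiableAt z (not_le.1 (by simpa using hrz)).le (mem_ball_zero_iff.1 hzR).le

lemma circleAverage_comp_mul_left (f : ℂ → ℂ) (c : ℂ) :
    circleAverage (fun z => f (c * z)) 0 1 = circleAverage f 0 ‖c‖ := by
  have rotate (u : ℝ) : c * circleMap 0 1 u = circleMap 0 ‖c‖ (u + arg c) := by
    conv_lhs => rw [← norm_mul_exp_arg_mul_I c]
    simp only [circleMap_zero, ofReal_one, one_mul, ofReal_add, add_mul, Complex.exp_add]
    ring
  rw [circleAverage_eq_integral_add (f := f) (arg c)]
  simp only [circleAverage, rotate]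

lemma circleAverage_comp_mul_left_eq {c : ℂ} (hc : c ≠ 0)
    (hf : ∀ z : ℂ, ‖z‖ ∈ Set.uIcc ‖c‖ 1 → DifferentiableAt ℂ f z) :
    circleAverage (fun z => f (c * z)) 0 1 = circleAverage f 0 1 := by
  rw [circleAverage_comp_mul_left,
    circleAverage_eq_of_differentiableAt (norm_pos_iff.2 hc) one_pos hf]

lemma circleAverage_const_mul (a : ℂ) (f : ℂ → ℂ) :
    circleAverage (fun z => a * f z) 0 1 = a * circleAverage f 0 1 := by
  simpa only [smul_eq_mul] using circleAverage_fun_smul (a := a) (f := f) (c := 0) (R := 1)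

lemma circleAverage_congr_of_norm_eq_one {f g : ℂ → ℂ} (h : ∀ z : ℂ, ‖z‖ = 1 → f z = g z) :
    circleAverage f 0 1 = circleAverage g 0 1 :=
  circleAverage_congr_sphere fun z hz => h z (by simpa using hz)

lemma ne_zero_of_norm_eq_one {z : ℂ} (hz : ‖z‖ = 1) : z ≠ 0 := by
  rw [← norm_ne_zero_iff, hz]; exact one_ne_zero

lemma norm_pos_of_mem_uIcc {r R x : ℝ} (hr : 0 < r) (hR : 0 < R) (hx : x ∈ Set.uIcc r R) : 0 < x :=
  (lt_min hr hR).trans_le hx.1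

lemma eq_zero_of_circleAverage_zpow_mul_eq_zero (hf : ContinuousOn f (Metric.sphere 0 1))
    (h : ∀ n : ℤ, circleAverage (fun z => z ^ n * f z) 0 1 = 0) :
    Set.EqOn f 0 (Metric.sphere 0 1) := by
  have : Fact (0 < 2 * π) := ⟨Real.two_pi_pos⟩
  let F : C(AddCircle (2 * π), ℂ) := ⟨fun x => f (AddCircle.toCircle x),
    hf.comp_continuous (continuous_subtype_val.comp AddCircle.continuous_toCircle)
      fun x => (AddCircle.toCircle x).2⟩
  have toCircle_coe (u : ℝ) : (AddCircle.toCircle (u : AddCircle (2 * π)) : ℂ) = exp (u * I) := by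
    rw [AddCircle.toCircle_apply_mk, Circle.coe_exp, div_self Real.two_pi_pos.ne', one_mul]
  have fourierCoeff_eq_zero (n : ℤ) : fourierCoeff F n = 0 := by
    rw [fourierCoeff_eq_intervalIntegral _ n 0, ← h (-n), circleAverage, one_div, zero_add]
    congr 2 with u
    simp only [F, ContinuousMap.coe_mk, fourier_apply, AddCircle.toCircle_zsmul, Circle.coe_zpow,
      toCircle_coe, smul_eq_mul, circleMap_zero, ofReal_one, one_mul]
  intro z hz
  have series := has_pointwise_sum_fourier_series_of_summable (f := F)
    (by rw [funext fourierCoeff_eq_zero]; exact summable_zero) (arg z : AddCircle (2 * π))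
  simp only [fourierCoeff_eq_zero, zero_smul] at series
  have z_eq : exp (arg z * I) = z := by
    simpa [mem_sphere_zero_iff_norm.1 hz] using norm_mul_exp_arg_mul_I z
  simpa [F, toCircle_coe, z_eq] using series.unique hasSum_zero

lemma isPreconnected_sphere_zero_one : IsPreconnected (Metric.sphere (0 : ℂ) 1) :=
  isPreconnected_sphere (by simp) 0 1

lemma eqOn_zero_of_circleAverage_zpow_mul_eq_zero {U : Set ℂ} (hU : IsOpen U)
    (hUc : IsPreconnected U) (hSU : Metric.sphere 0 1 ⊆ U) (hf : DifferentiableOn ℂ f U)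
    (h : ∀ n : ℤ, circleAverage (fun z => z ^ n * f z) 0 1 = 0) : Set.EqOn f 0 U := by
  have one_mem : (1 : ℂ) ∈ Metric.sphere 0 1 := by simp
  have nontrivial : (Metric.sphere (0 : ℂ) 1).Nontrivial :=
    ⟨1, one_mem, -1, by simp, by norm_num⟩
  have accPt : AccPt 1 (𝓟 (Metric.sphere (0 : ℂ) 1)) :=
    isPreconnected_sphere_zero_one.preperfect_of_nontrivial nontrivial 1 one_mem
  exact (hf.analyticOnNhd hU).eqOn_zero_of_preconnected_of_frequently_eq_zero hUc (hSU one_mem)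
    ((accPt_iff_frequently_nhdsNE.1 accPt).mono
      (eq_zero_of_circleAverage_zpow_mul_eq_zero (hf.continuousOn.mono hSU) h))

lemma circleAverage_zpow_mul_of_quasiperiodic {p C : ℂ} {k : ℤ} (hp : p ≠ 0)
    (hf : ∀ z : ℂ, ‖z‖ ∈ Set.uIcc ‖p‖ 1 → DifferentiableAt ℂ f z)
    (hshift : ∀ z : ℂ, ‖z‖ = 1 → f (p * z) = C * z ^ k * f z) (n : ℤ) :
    circleAverage (fun z => z ^ n * f z) 0 1 =
      p ^ n * C * circleAverage (fun z => z ^ (n + k) * f z) 0 1 := by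
  rw [← circleAverage_comp_mul_left_eq hp fun z hz => ?_, ← circleAverage_const_mul]
  · refine circleAverage_congr_of_norm_eq_one fun z hz => ?_
    rw [hshift z hz, mul_zpow, zpow_add₀ (ne_zero_of_norm_eq_one hz)]
    ring
  · have hz0 := norm_pos_iff.1 (norm_pos_of_mem_uIcc (norm_pos_iff.2 hp) one_pos hz)
    exact (differentiableAt_zpow.2 (Or.inl hz0)).mul (hf z hz)

end CircleAverages

section QuasiperiodicFunctions

variable {f : ℂ → ℂ} {p q : ℂ}

lemma eq_zero_of_quasiperiodic_degree_two {C : ℂ} (hp : p ≠ 0) (hC : C ≠ 0)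
    (hf : ∀ z ≠ 0, DifferentiableAt ℂ f z)
    (hshift : ∀ z ≠ 0, f (p * z) = C * z ^ (-2 : ℤ) * f z)
    (h0 : circleAverage f 0 1 = 0) (h1 : circleAverage (fun z => z ^ (-1 : ℤ) * f z) 0 1 = 0) :
    ∀ z ≠ 0, f z = 0 := by
  let coeff (n : ℤ) := circleAverage (fun z => z ^ n * f z) 0 1
  have recurrence (n : ℤ) : coeff n = p ^ n * C * coeff (n - 2) :=
    circleAverage_zpow_mul_of_quasiperiodic hp
      (fun z hz => hf z (norm_pos_iff.1 (norm_pos_of_mem_uIcc (norm_pos_iff.2 hp) one_pos hz)))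
      (fun z hz => hshift z (ne_zero_of_norm_eq_one hz)) n
  have coeff_iff (n : ℤ) : coeff n = 0 ↔ coeff (n - 2) = 0 := by
    rw [recurrence n, mul_eq_zero, or_iff_right (mul_ne_zero (zpow_ne_zero n hp) hC)]
  have coeff_eq_zero (n : ℤ) : coeff n = 0 ∧ coeff (n - 1) = 0 := by
    induction n using Int.induction_on with
    | zero => exact ⟨by simpa [coeff] using h0, h1⟩
    | succ n ih =>
      refine ⟨(coeff_iff _).2 ?_, by simpa using ih.1⟩
      convert ih.2 using 2; ring
    | pred n ih => exact ⟨ih.2, by simpa [sub_sub, one_add_one_eq_two] using (coeff_iff _).1 ih.1⟩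
  exact eqOn_zero_of_circleAverage_zpow_mul_eq_zero isOpen_compl_singleton
    (isConnected_compl_singleton_of_one_lt_rank (by simp) 0).isPreconnected
    (fun z hz => ne_zero_of_norm_eq_one (by simpa using hz))
    (fun z hz => (hf z hz).differentiableWithinAt) fun n => (coeff_eq_zero n).1

/-- The open annulus `r < ‖z‖ < R` around the origin. -/
def annulus (r R : ℝ) : Set ℂ := {z | ‖z‖ ∈ Set.Ioo r R}

lemma isOpen_annulus (r R : ℝ) : IsOpen (annulus r R) :=
  isOpen_Ioo.preimage continuous_norm

lemma isPreconnected_annulus {r R : ℝ} (hr : 0 ≤ r) : IsPreconnected (annulus r R) := by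
  have polar : annulus r R =
      (fun x : ℝ × ℂ => (x.1 : ℂ) * x.2) '' (Set.Ioo r R ×ˢ Metric.sphere 0 1) := by
    ext z
    constructor
    · intro hz
      have hz0 : (‖z‖ : ℂ) ≠ 0 := ofReal_ne_zero.2 (hr.trans_lt hz.1).ne'
      exact ⟨(‖z‖, z / ‖z‖), ⟨hz, by simpa using div_self (ofReal_ne_zero.1 hz0)⟩,
        mul_div_cancel₀ z hz0⟩
    · rintro ⟨⟨ρ, u⟩, ⟨hρ, hu⟩, rfl⟩
      simpa [annulus, mem_sphere_zero_iff_norm.1 hu, abs_of_pos (hr.trans_lt hρ.1)] using hρ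
  rw [polar]
  exact (isPreconnected_Ioo.prod isPreconnected_sphere_zero_one).image _ (by fun_prop)

lemma eqOn_circleAverage_of_periodic {r R : ℝ} (hq0 : q ≠ 0) (hq : ‖q‖ < 1) (hr : 0 ≤ r)
    (hrq : r < ‖q‖) (hR : 1 < R) (hf : DifferentiableOn ℂ f (annulus r R))
    (hshift : ∀ z : ℂ, ‖z‖ = 1 → f (q * z) = f z) :
    Set.EqOn f (fun _ => circleAverage f 0 1) (annulus r R) := by
  set g : ℂ → ℂ := fun z => f z - circleAverage f 0 1 with hg
  have hg_diff : DifferentiableOn ℂ g (annulus r R) := hf.sub_const _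
  have sphere_subset : Metric.sphere 0 1 ⊆ annulus r R := fun z hz => by
    rw [mem_sphere_zero_iff_norm] at hz
    exact ⟨hz ▸ hrq.trans hq, hz ▸ hR⟩
  have differentiableAt (z : ℂ) (hz : ‖z‖ ∈ Set.uIcc ‖q‖ 1) : DifferentiableAt ℂ g z := by
    rw [Set.uIcc_of_le hq.le] at hz
    exact hg_diff.differentiableAt
      ((isOpen_annulus r R).mem_nhds ⟨hrq.trans_le hz.1, hz.2.trans_lt hR⟩)
  have average_eq_zero : circleAverage g 0 1 = 0 := by
    rw [hg, circleAverage_fun_sub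
      ((hf.continuousOn.mono sphere_subset).circleIntegrable zero_le_one)
      (circleIntegrable_const _ _ _), circleAverage_const, sub_self]
  have coeff_eq_zero (n : ℤ) : circleAverage (fun z => z ^ n * g z) 0 1 = 0 := by
    rcases eq_or_ne n 0 with rfl | hn
    · simpa using average_eq_zero
    have recurrence := circleAverage_zpow_mul_of_quasiperiodic (C := 1) (k := 0) hq0
      differentiableAt (fun z hz => by simp [hg, hshift z hz]) n
    rw [mul_one, add_zero] at recurrence
    refine (mul_left_eq_self₀.1 recurrence.symm).resolve_left fun h => ?_
    have norm_zpow_eq_one : ‖q‖ ^ n = 1 := by rw [← norm_zpow, h, norm_one]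
    exact hn ((zpow_eq_one_iff_right₀ (norm_nonneg q) hq.ne).1 norm_zpow_eq_one)
  intro z hz
  exact sub_eq_zero.1 (eqOn_zero_of_circleAverage_zpow_mul_eq_zero (isOpen_annulus r R)
    (isPreconnected_annulus hr) sphere_subset hg_diff coeff_eq_zero hz)

end QuasiperiodicFunctions

section ThetaIdentities

variable {p : ℂ}

lemma exists_linear_relation_of_quasiperiodic_degree_two {C : ℂ} {f : Fin 3 → ℂ → ℂ} (hp : p ≠ 0)
    (hC : C ≠ 0) (hf : ∀ i, ∀ z ≠ 0, DifferentiableAt ℂ (f i) z)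
    (hshift : ∀ i, ∀ z ≠ 0, f i (p * z) = C * z ^ (-2 : ℤ) * f i z) :
    ∃ c : Fin 3 → ℂ, c ≠ 0 ∧ ∀ z ≠ 0, ∑ i, c i * f i z = 0 := by
  let coeff (n : ℤ) (i : Fin 3) : ℂ := circleAverage (fun z => z ^ n * f i z) 0 1
  obtain ⟨c, hc_ker, hc⟩ := (LinearMap.ker (Matrix.mulVecLin (.of ![coeff 0, coeff (-1)]))
    ).exists_mem_ne_zero_of_ne_bot (LinearMap.ker_ne_bot_of_finrank_lt (by simp))
  have coeff_dot (i : Fin 2) : ![coeff 0, coeff (-1)] i ⬝ᵥ c = 0 := congrFun hc_ker i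
  have average (n : ℤ) :
      circleAverage (fun z => z ^ n * ∑ i, c i * f i z) 0 1 = coeff n ⬝ᵥ c := by
    have integrable (i : Fin 3) : CircleIntegrable (fun z => c i * (z ^ n * f i z)) 0 1 :=
      ContinuousOn.circleIntegrable zero_le_one fun z hz => by
        have hz0 := ne_zero_of_norm_eq_one (mem_sphere_zero_iff_norm.1 hz)
        exact (((differentiableAt_zpow.2 (Or.inl hz0)).mul
          (hf i z hz0)).const_mul _).continuousAt.continuousWithinAt
    simp only [Finset.mul_sum, mul_left_comm _ (c _)]
    rw [circleAverage_fun_sum fun i _ => integrable i, dotProduct]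
    exact Finset.sum_congr rfl fun i _ => by rw [circleAverage_const_mul, mul_comm]
  refine ⟨c, hc, eq_zero_of_quasiperiodic_degree_two hp hC (fun z hz => ?_) (fun z hz => ?_)
    (by simpa using (average 0).trans (coeff_dot 0)) ((average (-1)).trans (coeff_dot 1))⟩
  · exact DifferentiableAt.fun_sum fun i _ => (hf i z hz).const_mul _
  · rw [Finset.mul_sum]
    exact Finset.sum_congr rfl fun i _ => by rw [hshift i z hz]; ring

/-- The antisymmetric combination `a⁻¹ θ(az;p) θ(a/z;p)`, a degree-two theta function of `z`. -/
noncomputable def thetaBracket (p a z : ℂ) : ℂ := a⁻¹ * (theta p (a * z) * theta p (a * z⁻¹))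

lemma differentiableAt_thetaBracket {a z : ℂ} (hp : ‖p‖ < 1) (ha : a ≠ 0) (hz : z ≠ 0) :
    DifferentiableAt ℂ (thetaBracket p a) z := by
  refine DifferentiableAt.const_mul (.mul ?_ ?_) _
  · exact (differentiableAt_theta hp (mul_ne_zero ha hz)).fun_comp' z (by fun_prop)
  · exact (differentiableAt_theta hp (mul_ne_zero ha (inv_ne_zero hz))).fun_comp' z
      (by fun_prop (disch := exact hz))

lemma thetaBracket_mul_left {a z : ℂ} (hp : ‖p‖ < 1) (hp0 : p ≠ 0) (ha : a ≠ 0) (hz : z ≠ 0) :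
    thetaBracket p a (p * z) = p⁻¹ * z ^ (-2 : ℤ) * thetaBracket p a z := by
  have shift_inv := theta_mul_left (z := a * (p * z)⁻¹) hp hp0 (by simp [*])
  rw [show p * (a * (p * z)⁻¹) = a * z⁻¹ by field_simp] at shift_inv
  rw [thetaBracket, thetaBracket, mul_left_comm a p z, theta_mul_left hp hp0 (mul_ne_zero ha hz),
    shift_inv, zpow_neg, zpow_ofNat]
  field_simp

lemma thetaBracket_antisymm {a z : ℂ} (hp : ‖p‖ < 1) (ha : a ≠ 0) (hz : z ≠ 0) :
    thetaBracket p a z = -thetaBracket p z a := by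
  have inv := theta_inv (z := a * z⁻¹) hp (mul_ne_zero ha (inv_ne_zero hz))
  rw [show (a * z⁻¹)⁻¹ = z * a⁻¹ by field_simp] at inv
  rw [thetaBracket, thetaBracket, inv, mul_comm z a]
  field_simp

lemma thetaBracket_self {a : ℂ} (hp : ‖p‖ < 1) (ha : a ≠ 0) : thetaBracket p a a = 0 :=
  self_eq_neg.1 (thetaBracket_antisymm hp ha ha)

lemma thetaBracket_inv_right (p a z : ℂ) : thetaBracket p a z⁻¹ = thetaBracket p a z := by
  rw [thetaBracket, thetaBracket, inv_inv, mul_comm (theta p _)]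

/- Three degree-two theta functions are linearly dependent; evaluating the relation between
`thetaBracket p x`, `thetaBracket p y`, `thetaBracket p u` at `x`, `y`, `u` and `v` and eliminating
its coefficients gives the identity. -/
lemma thetaBracket_plucker {x y u v : ℂ} (hp : ‖p‖ < 1) (hp0 : p ≠ 0) (hx : x ≠ 0) (hy : y ≠ 0)
    (hu : u ≠ 0) (hv : v ≠ 0) :
    thetaBracket p x y * thetaBracket p u v - thetaBracket p x u * thetaBracket p y v +
      thetaBracket p x v * thetaBracket p y u = 0 := by
  have hw : ∀ i, ![x, y, u] i ≠ 0 := by simp [Fin.forall_fin_succ, hx, hy, hu]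
  obtain ⟨c, hc, relation⟩ := exists_linear_relation_of_quasiperiodic_degree_two
    (f := fun i => thetaBracket p (![x, y, u] i)) hp0 (inv_ne_zero hp0)
    (fun i z hz => differentiableAt_thetaBracket hp (hw i) hz)
    (fun i z hz => thetaBracket_mul_left hp hp0 (hw i) hz)
  simp only [Fin.sum_univ_three, Matrix.cons_val] at relation
  have at_x := relation x hx
  have at_y := relation y hy
  have at_u := relation u hu
  have at_v := relation v hv
  rw [thetaBracket_self hp hx, thetaBracket_antisymm hp hy hx, thetaBracket_antisymm hp hu hx]
    at at_x
  rw [thetaBracket_self hp hy, thetaBracket_antisymm hp hu hy] at at_y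
  rw [thetaBracket_self hp hu] at at_u
  obtain ⟨i, hi⟩ := Function.ne_iff.1 hc
  refine (mul_eq_zero.1 (?_ : c i * _ = 0)).resolve_left hi
  match i with
  | 0 => linear_combination thetaBracket p y u * at_v - thetaBracket p y v * at_u +
      thetaBracket p u v * at_y
  | 1 => linear_combination -thetaBracket p u v * at_x - thetaBracket p x u * at_v +
      thetaBracket p x v * at_u
  | 2 => linear_combination thetaBracket p x y * at_v + thetaBracket p y v * at_x -
      thetaBracket p x v * at_y

lemma theta_mul_inv {x : ℂ} (hp : ‖p‖ < 1) (hp0 : p ≠ 0) (hx : x ≠ 0) :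
    theta p (p * x⁻¹) = theta p x := by
  rw [theta_mul_left hp hp0 (inv_ne_zero hx), theta_inv hp hx, inv_inv]
  field_simp

lemma theta_ne_zero_of_norm_eq_one {x : ℂ} (hp : ‖p‖ < 1) (hx : ‖x‖ = 1) (hx1 : x ≠ 1) :
    theta p x ≠ 0 := by
  rw [theta, qpoch_eq_one_sub_mul hp]
  refine mul_ne_zero (mul_ne_zero (sub_ne_zero.2 hx1.symm) (qpoch_ne_zero hp ?_))
    (qpoch_ne_zero hp ?_)
  · rwa [norm_mul, hx, mul_one]
  · rwa [norm_mul, norm_inv, hx, inv_one, mul_one]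

lemma theta_mul_theta_eq_thetaBracket {a b c x : ℂ} (ha : a ≠ 0) (hc : c ≠ 0) (hx : x ≠ 0)
    (hcab : c ^ 2 = a * b) :
    theta p (a * x) * theta p (b * x) = c * x * thetaBracket p (c * x) (a * c⁻¹) := by
  have hb : c * x * (a * c⁻¹)⁻¹ = b * x := by
    field_simp
    exact hcab
  rw [thetaBracket, hb, show c * x * (a * c⁻¹) = a * x by field_simp]
  field_simp

/- Since `s t c² d² = p`, each bracket with second argument `c z` can be rewritten through
`theta_mul_inv` so that the claim becomes the Plücker relation for `s d, t d, d / z, e`. -/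
lemma thetaBracket_four_term_special {s t c d z e : ℂ} (hp : ‖p‖ < 1) (hp0 : p ≠ 0) (hs : s ≠ 0)
    (ht : t ≠ 0) (hc : c ≠ 0) (hd : d ≠ 0) (hz : z ≠ 0) (he : e ≠ 0)
    (hprod : s * t * c ^ 2 * d ^ 2 = p) :
    theta p (z ^ 2) * (s * t) * (t * thetaBracket p s z * thetaBracket p (t * d) e *
        thetaBracket p (t * c) (c * z) -
      s * thetaBracket p t z * thetaBracket p (s * d) e * thetaBracket p (s * c) (c * z)) +
    t * theta p (s * t⁻¹) * z * (theta p (s * z⁻¹) * theta p (t * z⁻¹) *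
      thetaBracket p (d * z⁻¹) e * thetaBracket p (c * z⁻¹) (c * z)) = 0 := by
  have plucker := thetaBracket_plucker (x := s * d) (y := t * d) (u := d * z⁻¹) (v := e) hp hp0
    (mul_ne_zero hs hd) (mul_ne_zero ht hd) (mul_ne_zero hd (inv_ne_zero hz)) he
  have bracket {x y a b : ℂ} (ha : x * y = a) (hb : x * y⁻¹ = b) :
      thetaBracket p x y = x⁻¹ * (theta p a * theta p b) := by rw [thetaBracket, ha, hb]
  rw [bracket (x := s * d) (y := t * d) (a := s * t * d ^ 2) (b := s * t⁻¹) (by ring)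
      (by field_simp),
    bracket (x := s * d) (y := d * z⁻¹) (a := s * d ^ 2 * z⁻¹) (b := s * z) (by ring)
      (by field_simp),
    bracket (x := t * d) (y := d * z⁻¹) (a := t * d ^ 2 * z⁻¹) (b := t * z) (by ring)
      (by field_simp)] at plucker
  rw [bracket (x := s) (y := z) rfl rfl, bracket (x := t) (y := z) rfl rfl,
    bracket (x := t * c) (y := c * z) (a := p * (s * d ^ 2 * z⁻¹)⁻¹) (b := t * z⁻¹)
      (by rw [← hprod]; field_simp) (by field_simp),
    bracket (x := s * c) (y := c * z) (a := p * (t * d ^ 2 * z⁻¹)⁻¹) (b := s * z⁻¹)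
      (by rw [← hprod]; field_simp) (by field_simp),
    bracket (x := c * z⁻¹) (y := c * z) (a := p * (s * t * d ^ 2)⁻¹) (b := (z ^ 2)⁻¹)
      (by rw [← hprod]; field_simp) (by field_simp),
    theta_mul_inv hp hp0 (by positivity), theta_mul_inv hp hp0 (by positivity),
    theta_mul_inv hp hp0 (by positivity), theta_inv hp (by positivity)]
  field_simp at plucker ⊢
  linear_combination -theta p (s / z) * theta p (t / z) * theta p (z ^ 2) * plucker

/- Both sides are combinations of brackets with second argument `g`, hence by the Plücker relation
determined by their values at `g = c z` and `g = c / z`. -/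
lemma thetaBracket_four_term {s t c d z e g : ℂ} (hp : ‖p‖ < 1) (hp0 : p ≠ 0) (hs : s ≠ 0)
    (ht : t ≠ 0) (hc : c ≠ 0) (hd : d ≠ 0) (hz : z ≠ 0) (he : e ≠ 0) (hg : g ≠ 0)
    (hprod : s * t * c ^ 2 * d ^ 2 = p) (hne : thetaBracket p (c * z⁻¹) (c * z) ≠ 0) :
    theta p (z ^ 2) * (s * t) * (t * thetaBracket p s z * thetaBracket p (t * d) e *
        thetaBracket p (t * c) g -
      s * thetaBracket p t z * thetaBracket p (s * d) e * thetaBracket p (s * c) g) +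
    t * theta p (s * t⁻¹) * z *
      (theta p (s * z⁻¹) * theta p (t * z⁻¹) * thetaBracket p (d * z⁻¹) e *
          thetaBracket p (c * z⁻¹) g -
        theta p (s * z) * theta p (t * z) * thetaBracket p (d * z) e *
          thetaBracket p (c * z) g) = 0 := by
  have hz' := inv_ne_zero hz
  have hcz := mul_ne_zero hc hz
  have hcz' := mul_ne_zero hc hz'
  have at_cz := thetaBracket_four_term_special hp hp0 hs ht hc hd hz he hprod
  have at_c_div_z := thetaBracket_four_term_special hp hp0 hs ht hc hd hz' he hprod
  rw [thetaBracket_inv_right, thetaBracket_inv_right, inv_inv, inv_pow,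
    theta_inv hp (by positivity), thetaBracket_antisymm hp hcz hcz'] at at_c_div_z
  have interpolation (x : ℂ) (hx : x ≠ 0) := thetaBracket_plucker hp hp0 hx hcz' hcz hg
  have bracket_t := interpolation (t * c) (mul_ne_zero ht hc)
  have bracket_s := interpolation (s * c) (mul_ne_zero hs hc)
  generalize thetaBracket p (c * z⁻¹) (c * z) = B at *
  refine (mul_eq_zero.1 (?_ : B * _ = 0)).resolve_left hne
  field_simp at at_cz at_c_div_z bracket_t bracket_s ⊢
  linear_combination thetaBracket p (c / z) g * at_cz + thetaBracket p (z * c) g * at_c_div_z +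
    theta p (z ^ 2) * (s * t) * (t * thetaBracket p s z * thetaBracket p (t * d) e * bracket_t -
      s * thetaBracket p t z * thetaBracket p (s * d) e * bracket_s)

lemma theta_six_term_of_sq_eq {t : Fin 6 → ℂ} {c d z : ℂ} (hp : ‖p‖ < 1) (hp0 : p ≠ 0) (hz : z ≠ 0)
    (hprod : ∏ i, t i = p) (hc : c ^ 2 = t 1 * t 2) (hd : d ^ 2 = t 3 * t 4)
    (hne : thetaBracket p (c * z⁻¹) (c * z) ≠ 0) :
    theta p (z ^ 2) *
      (theta p (t 0 * z) * theta p (t 0 * z⁻¹) * ∏ j ∈ {1, 2, 3, 4}, theta p (t 5 * t j) -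
        theta p (t 5 * z) * theta p (t 5 * z⁻¹) * ∏ j ∈ {1, 2, 3, 4}, theta p (t 0 * t j)) =
    -t 5 * theta p (t 0 * (t 5)⁻¹) *
      (z ^ 3 * ∏ i, theta p (t i * z⁻¹) - z⁻¹ * ∏ i, theta p (t i * z)) := by
  have ht : ∀ i, t i ≠ 0 := by
    simpa [Finset.prod_ne_zero_iff] using hprod.trans_ne hp0
  have hc0 : c ≠ 0 := by rintro rfl; simpa [ht] using hc.symm
  have hd0 : d ≠ 0 := by rintro rfl; simpa [ht] using hd.symm
  have four_term := thetaBracket_four_term (e := t 3 * d⁻¹) (g := t 1 * c⁻¹) hp hp0 (ht 0) (ht 5)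
    hc0 hd0 hz (mul_ne_zero (ht 3) (inv_ne_zero hd0)) (mul_ne_zero (ht 1) (inv_ne_zero hc0))
    (by rw [hc, hd, ← hprod, Fin.prod_univ_six]; ring) hne
  have pair12 (x : ℂ) (hx : x ≠ 0) := theta_mul_theta_eq_thetaBracket (p := p) (ht 1) hc0 hx hc
  have pair34 (x : ℂ) (hx : x ≠ 0) := theta_mul_theta_eq_thetaBracket (p := p) (ht 3) hd0 hx hd
  have regroup (x : ℂ) (hx : x ≠ 0) : ∏ i, theta p (t i * x) = theta p (t 0 * x) *
      (c * x * thetaBracket p (c * x) (t 1 * c⁻¹)) *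
      (d * x * thetaBracket p (d * x) (t 3 * d⁻¹)) * theta p (t 5 * x) := by
    rw [← pair12 x hx, ← pair34 x hx, Fin.prod_univ_six]
    ring
  have regroup' (x : ℂ) (hx : x ≠ 0) : ∏ j ∈ {1, 2, 3, 4}, theta p (x * t j) =
      (x * c * thetaBracket p (x * c) (t 1 * c⁻¹)) *
      (x * d * thetaBracket p (x * d) (t 3 * d⁻¹)) := by
    rw [mul_comm x, mul_comm x, ← pair12 x hx, ← pair34 x hx]
    simp [mul_comm x, mul_assoc]
  rw [regroup z hz, regroup z⁻¹ (inv_ne_zero hz), regroup' _ (ht 0), regroup' _ (ht 5)]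
  have unfold_bracket (a : ℂ) (ha : a ≠ 0) :
      theta p (a * z) * theta p (a * z⁻¹) = a * thetaBracket p a z :=
    (mul_inv_cancel_left₀ ha _).symm
  rw [unfold_bracket _ (ht 0), unfold_bracket _ (ht 5)]
  field_simp at four_term ⊢
  linear_combination four_term

lemma theta_six_term_zero_five {t : Fin 6 → ℂ} {z : ℂ} (hp : ‖p‖ < 1) (hp0 : p ≠ 0) (hz : ‖z‖ = 1)
    (hprod : ∏ i, t i = p) (h12 : theta p (t 1 * t 2) ≠ 0) :
    theta p (z ^ 2) *
      (theta p (t 0 * z) * theta p (t 0 * z⁻¹) * ∏ j ∈ {1, 2, 3, 4}, theta p (t 5 * t j) -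
        theta p (t 5 * z) * theta p (t 5 * z⁻¹) * ∏ j ∈ {1, 2, 3, 4}, theta p (t 0 * t j)) =
    -t 5 * theta p (t 0 * (t 5)⁻¹) *
      (z ^ 3 * ∏ i, theta p (t i * z⁻¹) - z⁻¹ * ∏ i, theta p (t i * z)) := by
  have hz0 := ne_zero_of_norm_eq_one hz
  by_cases hz2 : z ^ 2 = 1
  · have z_inv : z⁻¹ = z := by field_simp; exact hz2.symm
    rw [hz2, theta_one hp, z_inv, pow_succ, hz2]
    ring
  obtain ⟨c, hc⟩ := IsAlgClosed.exists_pow_nat_eq (t 1 * t 2) two_pos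
  obtain ⟨d, hd⟩ := IsAlgClosed.exists_pow_nat_eq (t 3 * t 4) two_pos
  have hc0 : c ≠ 0 := by
    rintro rfl
    simp [Fin.prod_univ_six, mul_assoc, ← hc, hp0.symm] at hprod
  refine theta_six_term_of_sq_eq hp hp0 hz0 hprod hc hd ?_
  rw [thetaBracket, show c * z⁻¹ * (c * z) = t 1 * t 2 by rw [← hc]; field_simp,
    show c * z⁻¹ * (c * z)⁻¹ = (z ^ 2)⁻¹ by field_simp]
  exact mul_ne_zero (by positivity) (mul_ne_zero h12
    (theta_ne_zero_of_norm_eq_one hp (by simp [hz]) (inv_ne_one.2 hz2)))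

/-- Six parameters in the unit disc with product `c`; for `c = p q` this is the balancing condition
of the elliptic beta integral. -/
def balancedParams (c : ℂ) : Set (Fin 6 → ℂ) := {t | (∀ i, ‖t i‖ < 1) ∧ ∏ i, t i = c}

lemma ne_zero_of_mem_balancedParams {c : ℂ} {t : Fin 6 → ℂ} (hc : c ≠ 0)
    (ht : t ∈ balancedParams c) (i : Fin 6) : t i ≠ 0 :=
  Finset.prod_ne_zero_iff.1 (ht.2.trans_ne hc) i (Finset.mem_univ i)

lemma norm_mul_lt_one {a b : ℂ} (ha : ‖a‖ < 1) (hb : ‖b‖ < 1) : ‖a * b‖ < 1 := by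
  rw [norm_mul]
  exact mul_lt_one_of_nonneg_of_lt_one_left (norm_nonneg a) ha hb.le

lemma norm_lt_norm_mul_of_mem_balancedParams {c : ℂ} {t : Fin 6 → ℂ} {i j : Fin 6} (hc : c ≠ 0)
    (ht : t ∈ balancedParams c) (hij : i ≠ j) : ‖c‖ < ‖t i * t j‖ := by
  have ht0 := ne_zero_of_mem_balancedParams hc ht
  have rest_nonempty : (Finset.univ \ {i, j}).Nonempty := by
    rw [← Finset.card_pos, Finset.card_sdiff_of_subset (Finset.subset_univ _),
      Finset.card_pair hij]
    simp
  have rest_lt_one : ∏ k ∈ Finset.univ \ {i, j}, ‖t k‖ < 1 := by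
    simpa using Finset.prod_lt_prod_of_nonempty (g := fun _ => 1)
      (fun k _ => norm_pos_iff.2 (ht0 k)) (fun k _ => ht.1 k) rest_nonempty
  rw [← ht.2, ← Finset.prod_sdiff (Finset.subset_univ {i, j}), Finset.prod_pair hij, norm_mul,
    norm_prod]
  exact mul_lt_of_lt_one_left (norm_pos_iff.2 (mul_ne_zero (ht0 i) (ht0 j))) rest_lt_one

lemma theta_mul_ne_zero_of_mem_balancedParams {t : Fin 6 → ℂ} {i j : Fin 6} (hp : ‖p‖ < 1)
    (hp0 : p ≠ 0) (ht : t ∈ balancedParams p) (hij : i ≠ j) : theta p (t i * t j) ≠ 0 :=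
  theta_ne_zero hp (norm_lt_norm_mul_of_mem_balancedParams hp0 ht hij)
    (norm_mul_lt_one (ht.1 i) (ht.1 j))

lemma theta_six_term {t : Fin 6 → ℂ} {i j : Fin 6} {z : ℂ} (hp : ‖p‖ < 1) (hp0 : p ≠ 0)
    (hz : ‖z‖ = 1) (ht : t ∈ balancedParams p) (hij : i ≠ j) :
    theta p (z ^ 2) *
      (theta p (t i * z) * theta p (t i * z⁻¹) * ∏ k ∈ {i, j}ᶜ, theta p (t j * t k) -
        theta p (t j * z) * theta p (t j * z⁻¹) * ∏ k ∈ {i, j}ᶜ, theta p (t i * t k)) =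
    -t j * theta p (t i * (t j)⁻¹) *
      (z ^ 3 * ∏ k, theta p (t k * z⁻¹) - z⁻¹ * ∏ k, theta p (t k * z)) := by
  obtain ⟨σ, rfl, rfl⟩ : ∃ σ : Equiv.Perm (Fin 6), σ 0 = i ∧ σ 5 = j :=
    MulAction.is_two_pretransitive_iff.1
      (Equiv.Perm.isMultiplyPretransitive (Fin 6) 2) (by decide) hij
  have reindex (f : Fin 6 → ℂ) : ∏ k ∈ {σ 0, σ 5}ᶜ, f k = ∏ k ∈ {1, 2, 3, 4}, f (σ k) := by
    refine Eq.trans ?_ (Finset.prod_map {1, 2, 3, 4} σ.toEmbedding f)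
    congr 1
    ext k
    obtain ⟨k, rfl⟩ := σ.surjective k
    simp only [Finset.mem_compl, Finset.mem_insert, Finset.mem_singleton, σ.injective.eq_iff,
      Finset.mem_map_equiv, Equiv.symm_apply_apply]
    decide +revert
  have h12 : theta p (t (σ 1) * t (σ 2)) ≠ 0 :=
    theta_mul_ne_zero_of_mem_balancedParams hp hp0 ht (σ.injective.ne (by decide))
  have identity := theta_six_term_zero_five (t := t ∘ σ) hp hp0 hz
    ((Equiv.prod_comp σ t).trans ht.2) h12
  rw [reindex, reindex, ← Equiv.prod_comp σ, ← Equiv.prod_comp σ fun k => theta p (t k * z)]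
  exact identity

end ThetaIdentities

section BetaIntegral

variable {p q : ℂ}

/-- The product `Γ(a z^{±1};p,q)`. -/
noncomputable def gammaPair (p q a z : ℂ) : ℂ := egamma (a * z) p q * egamma (a * z⁻¹) p q

/-- The weight `1 / Γ(z^{±2};p,q)`, written through theta functions so that it is also analytic at
the points of the unit circle where `Γ(z^{±2};p,q)` has a pole. -/
noncomputable def betaWeight (p q z : ℂ) : ℂ := theta p (z ^ 2) * theta q (z ^ 2)⁻¹

/-- The integrand of the elliptic beta integral. -/
noncomputable def betaIntegrand (p q : ℂ) (t : Fin 6 → ℂ) (z : ℂ) : ℂ :=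
  (∏ i, gammaPair p q (t i) z) * betaWeight p q z

/-- The elliptic beta integral, normalized as an average over the unit circle. -/
noncomputable def ellipticBeta (p q : ℂ) (t : Fin 6 → ℂ) : ℂ :=
  circleAverage (betaIntegrand p q t) 0 1

/-- The product `∏_{i<j} Γ(tᵢ tⱼ;p,q)`, to which the elliptic beta integral is proportional. The
pairs `i < j` are encoded as two-element sets. -/
noncomputable def betaNormalizer (p q : ℂ) (t : Fin 6 → ℂ) : ℂ :=
  ∏ s ∈ Finset.powersetCard 2 Finset.univ, egamma (∏ i ∈ s, t i) p q

/-- The elliptic beta integral divided by `betaNormalizer`; evaluating the integral amounts to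
showing that this ratio does not depend on the parameters and finding its value. -/
noncomputable def betaRatio (p q : ℂ) (t : Fin 6 → ℂ) : ℂ :=
  ellipticBeta p q t / betaNormalizer p q t

lemma differentiableAt_gammaPair {E : Type*} [NormedAddCommGroup E] [NormedSpace ℂ E] {x : E}
    {a z : E → ℂ} (hp : ‖p‖ < 1) (hq : ‖q‖ < 1) (ha : DifferentiableAt ℂ a x)
    (hz : DifferentiableAt ℂ z x) (ha0 : a x ≠ 0) (hz0 : z x ≠ 0) (haz : ‖a x * z x‖ < 1)
    (haz' : ‖a x * (z x)⁻¹‖ < 1) : DifferentiableAt ℂ (fun x => gammaPair p q (a x) (z x)) x :=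
  ((differentiableAt_egamma hp hq (mul_ne_zero ha0 hz0) haz).fun_comp' x (ha.mul hz)).mul
    ((differentiableAt_egamma hp hq (mul_ne_zero ha0 (inv_ne_zero hz0)) haz').fun_comp' x
      (ha.mul (hz.inv hz0)))

lemma differentiableAt_theta_sq_inv {z : ℂ} (hq : ‖q‖ < 1) (hz : z ≠ 0) :
    DifferentiableAt ℂ (fun z => theta q (z ^ 2)⁻¹) z :=
  (differentiableAt_theta hq (z := (z ^ 2)⁻¹) (by positivity)).fun_comp' z
    (by fun_prop (disch := positivity))

lemma differentiableAt_betaWeight {z : ℂ} (hp : ‖p‖ < 1) (hq : ‖q‖ < 1) (hz : z ≠ 0) :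
    DifferentiableAt ℂ (betaWeight p q) z :=
  ((differentiableAt_theta hp (z := z ^ 2) (by positivity)).fun_comp' z (by fun_prop)).mul
    (differentiableAt_theta_sq_inv hq hz)

lemma differentiableAt_betaIntegrand {E : Type*} [NormedAddCommGroup E] [NormedSpace ℂ E] {x : E}
    {t : E → Fin 6 → ℂ} {z : E → ℂ} (hp : ‖p‖ < 1) (hq : ‖q‖ < 1) (ht : DifferentiableAt ℂ t x)
    (hz : DifferentiableAt ℂ z x) (ht0 : ∀ i, t x i ≠ 0) (ht1 : ∀ i, ‖t x i‖ < 1)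
    (hz1 : ‖z x‖ = 1) : DifferentiableAt ℂ (fun x => betaIntegrand p q (t x) (z x)) x := by
  have hz0 := ne_zero_of_norm_eq_one hz1
  have gamma_factor (i : Fin 6) : DifferentiableAt ℂ (fun x => gammaPair p q (t x i) (z x)) x :=
    differentiableAt_gammaPair hp hq (differentiableAt_pi.1 ht i) hz (ht0 i) hz0
      (by simpa [hz1] using ht1 i) (by simpa [hz1] using ht1 i)
  exact (HasFDerivAt.finsetProd fun i _ => (gamma_factor i).hasFDerivAt).differentiableAt.mul
    ((differentiableAt_betaWeight hp hq hz0).fun_comp' x hz)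

lemma gammaPair_mul_left {a z : ℂ} (hp : ‖p‖ < 1) (hq : ‖q‖ < 1) (hq0 : q ≠ 0) (ha0 : a ≠ 0)
    (ha : ‖a‖ < 1) (hz : ‖z‖ = 1) :
    gammaPair p q (q * a) z = theta p (a * z) * theta p (a * z⁻¹) * gammaPair p q a z := by
  have hz0 := ne_zero_of_norm_eq_one hz
  rw [gammaPair, gammaPair, mul_assoc, mul_assoc,
    egamma_mul_left hp hq hq0 (mul_ne_zero ha0 hz0) (by simpa [hz] using ha),
    egamma_mul_left hp hq hq0 (mul_ne_zero ha0 (inv_ne_zero hz0)) (by simpa [hz] using ha)]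
  ring

/-- The function of `z` whose difference under `z ↦ z / q` relates the integrands at two adjacent
parameter values. -/
noncomputable def betaTelescoper (p q : ℂ) (t : Fin 6 → ℂ) (z : ℂ) : ℂ :=
  (∏ i, egamma (q * (t i * z)) p q * egamma (t i * z⁻¹) p q) * (z⁻¹ * theta q (z ^ 2)⁻¹)

lemma differentiableAt_betaTelescoper {t : Fin 6 → ℂ} {z : ℂ} (hp : ‖p‖ < 1) (hq : ‖q‖ < 1)
    (hq0 : q ≠ 0) (ht0 : ∀ i, t i ≠ 0) (ht : ∀ i, ‖t i‖ < 1) (hz : 1 ≤ ‖z‖) (hqz : ‖q * z‖ ≤ 1) :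
    DifferentiableAt ℂ (betaTelescoper p q t) z := by
  have hz0 : z ≠ 0 := norm_pos_iff.1 (one_pos.trans_le hz)
  refine (DifferentiableAt.fun_finsetProd fun i _ => ?_).mul
    ((differentiableAt_inv hz0).mul (differentiableAt_theta_sq_inv hq hz0))
  have norm_left : ‖q * (t i * z)‖ < 1 := by
    rw [mul_left_comm, norm_mul]
    exact mul_lt_one_of_nonneg_of_lt_one_left (norm_nonneg _) (ht i) hqz
  have norm_right : ‖t i * z⁻¹‖ < 1 := by
    rw [norm_mul, norm_inv]
    exact mul_lt_one_of_nonneg_of_lt_one_left (norm_nonneg _) (ht i) (inv_le_one_of_one_le₀ hz)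
  have h_left := differentiableAt_egamma hp hq (by simp [*]) norm_left
  have h_right := differentiableAt_egamma hp hq (by simp [*]) norm_right
  exact (h_left.fun_comp' z (f := fun z => q * (t i * z)) (by fun_prop)).mul
    (h_right.fun_comp' z (f := fun z => t i * z⁻¹) (by fun_prop (disch := exact hz0)))

lemma betaTelescoper_of_norm_eq_one {t : Fin 6 → ℂ} {z : ℂ} (hp : ‖p‖ < 1) (hq : ‖q‖ < 1)
    (hq0 : q ≠ 0) (ht0 : ∀ i, t i ≠ 0) (ht : ∀ i, ‖t i‖ < 1) (hz : ‖z‖ = 1) :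
    betaTelescoper p q t z = z⁻¹ * (∏ i, theta p (t i * z)) *
      ((∏ i, gammaPair p q (t i) z) * theta q (z ^ 2)⁻¹) := by
  have hz0 := ne_zero_of_norm_eq_one hz
  have shift (i : Fin 6) : egamma (q * (t i * z)) p q = theta p (t i * z) * egamma (t i * z) p q :=
    egamma_mul_left hp hq hq0 (mul_ne_zero (ht0 i) hz0) (by simpa [hz] using ht i)
  simp only [betaTelescoper, gammaPair, shift, Finset.prod_mul_distrib]
  ring

lemma betaTelescoper_inv_mul {t : Fin 6 → ℂ} {z : ℂ} (hp : ‖p‖ < 1) (hq : ‖q‖ < 1)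
    (hq0 : q ≠ 0) (ht0 : ∀ i, t i ≠ 0) (ht : ∀ i, ‖t i‖ < 1) (hz : ‖z‖ = 1) :
    betaTelescoper p q t (q⁻¹ * z) = z ^ 3 * (∏ i, theta p (t i * z⁻¹)) *
      ((∏ i, gammaPair p q (t i) z) * theta q (z ^ 2)⁻¹) := by
  have hz0 := ne_zero_of_norm_eq_one hz
  have cancel (i : Fin 6) : q * (t i * (q⁻¹ * z)) = t i * z := by field_simp
  have shift (i : Fin 6) : egamma (t i * (q⁻¹ * z)⁻¹) p q =
      theta p (t i * z⁻¹) * egamma (t i * z⁻¹) p q := by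
    rw [← egamma_mul_left hp hq hq0 (mul_ne_zero (ht0 i) (inv_ne_zero hz0))
      (by simpa [hz] using ht i)]
    congr 1
    field_simp
  have theta_shift : theta q ((q⁻¹ * z) ^ 2)⁻¹ = q⁻¹ * z ^ 4 * theta q (z ^ 2)⁻¹ := by
    rw [show ((q⁻¹ * z) ^ 2)⁻¹ = q * (q * (z ^ 2)⁻¹) by field_simp,
      theta_mul_left hq hq0 (by positivity), theta_mul_left hq hq0 (by positivity)]
    field_simp
  have monomial : (q⁻¹ * z)⁻¹ * (q⁻¹ * z ^ 4) = z ^ 3 := by field_simp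
  simp only [betaTelescoper, gammaPair, cancel, shift, theta_shift, Finset.prod_mul_distrib,
    ← monomial]
  ring

lemma betaIntegrand_update_mul {t : Fin 6 → ℂ} {z : ℂ} (hp : ‖p‖ < 1) (hq : ‖q‖ < 1)
    (hq0 : q ≠ 0) (ht0 : ∀ i, t i ≠ 0) (ht : ∀ i, ‖t i‖ < 1) (hz : ‖z‖ = 1) (i : Fin 6) :
    betaIntegrand p q (Function.update t i (q * t i)) z =
      theta p (t i * z) * theta p (t i * z⁻¹) * betaIntegrand p q t z := by
  rw [betaIntegrand, betaIntegrand]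
  simp only [← Finset.mul_prod_erase Finset.univ _ (Finset.mem_univ i), Function.update_self,
    gammaPair_mul_left hp hq hq0 (ht0 i) (ht i) hz]
  rw [Finset.prod_congr rfl fun k hk => by rw [Function.update_of_ne (Finset.ne_of_mem_erase hk)]]
  ring

lemma mem_balancedParams_update {c : ℂ} {t : Fin 6 → ℂ} (hq : ‖q‖ < 1)
    (ht : t ∈ balancedParams c) (i : Fin 6) :
    Function.update t i (q * t i) ∈ balancedParams (c * q) := by
  refine ⟨fun k => ?_, ?_⟩
  · rcases eq_or_ne k i with rfl | hk
    · simpa using norm_mul_lt_one hq (ht.1 k)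
    · simpa [hk] using ht.1 k
  · rw [← ht.2, Finset.prod_update_of_mem (Finset.mem_univ i),
      ← Finset.mul_prod_erase Finset.univ t (Finset.mem_univ i), Finset.sdiff_singleton_eq_erase]
    ring

lemma circleIntegrable_of_differentiableAt {f : ℂ → ℂ}
    (hf : ∀ z : ℂ, ‖z‖ = 1 → DifferentiableAt ℂ f z) : CircleIntegrable f 0 1 :=
  ContinuousOn.circleIntegrable zero_le_one fun z hz =>
    (hf z (mem_sphere_zero_iff_norm.1 hz)).continuousAt.continuousWithinAt

lemma circleIntegrable_betaIntegrand {t : Fin 6 → ℂ} (hp : ‖p‖ < 1) (hq : ‖q‖ < 1)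
    (ht0 : ∀ i, t i ≠ 0) (ht : ∀ i, ‖t i‖ < 1) : CircleIntegrable (betaIntegrand p q t) 0 1 :=
  circleIntegrable_of_differentiableAt fun _ => differentiableAt_betaIntegrand hp hq
    (differentiableAt_const t) differentiableAt_fun_id ht0 ht

section Telescoping

variable {t : Fin 6 → ℂ}

lemma differentiableAt_betaTelescoper_of_mem_Icc {z : ℂ} (hp : ‖p‖ < 1) (hq : ‖q‖ < 1)
    (hq0 : q ≠ 0) (ht0 : ∀ i, t i ≠ 0) (ht : ∀ i, ‖t i‖ < 1) (hz : ‖z‖ ∈ Set.Icc 1 ‖q⁻¹‖) :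
    DifferentiableAt ℂ (betaTelescoper p q t) z :=
  differentiableAt_betaTelescoper hp hq hq0 ht0 ht hz.1 (by
    rw [norm_mul, ← le_inv_mul_iff₀ (norm_pos_iff.2 hq0), mul_one, ← norm_inv]; exact hz.2)

lemma circleAverage_betaTelescoper_inv_mul_sub (hp : ‖p‖ < 1) (hq : ‖q‖ < 1) (hq0 : q ≠ 0)
    (ht0 : ∀ i, t i ≠ 0) (ht : ∀ i, ‖t i‖ < 1) :
    circleAverage (fun z => betaTelescoper p q t (q⁻¹ * z) - betaTelescoper p q t z) 0 1 = 0 := by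
  have one_le_inv : 1 ≤ ‖q⁻¹‖ := by
    rw [norm_inv]; exact (one_le_inv₀ (norm_pos_iff.2 hq0)).2 hq.le
  have differentiableAt (z : ℂ) (hz : ‖z‖ ∈ Set.Icc 1 ‖q⁻¹‖) :=
    differentiableAt_betaTelescoper_of_mem_Icc hp hq hq0 ht0 ht hz
  have integrable : CircleIntegrable (betaTelescoper p q t) 0 1 :=
    circleIntegrable_of_differentiableAt fun z hz =>
      differentiableAt z (by simpa [hz] using one_le_inv)
  have integrable_shift : CircleIntegrable (fun z => betaTelescoper p q t (q⁻¹ * z)) 0 1 :=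
    circleIntegrable_of_differentiableAt fun z hz =>
      (differentiableAt (q⁻¹ * z) (by simpa [hz] using one_le_inv)).fun_comp' z (by fun_prop)
  rw [circleAverage_fun_sub integrable_shift integrable,
    circleAverage_comp_mul_left_eq (inv_ne_zero hq0) fun z hz =>
      differentiableAt z (Set.uIcc_of_ge one_le_inv ▸ hz), sub_self]

lemma betaIntegrand_update_mul_sub {i j : Fin 6} {z : ℂ} (hp : ‖p‖ < 1) (hp0 : p ≠ 0)
    (hq : ‖q‖ < 1) (hq0 : q ≠ 0) (ht : t ∈ balancedParams p) (hij : i ≠ j) (hz : ‖z‖ = 1) :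
    (∏ k ∈ {i, j}ᶜ, theta p (t j * t k)) * betaIntegrand p q (Function.update t i (q * t i)) z -
        (∏ k ∈ {i, j}ᶜ, theta p (t i * t k)) *
          betaIntegrand p q (Function.update t j (q * t j)) z =
      -t j * theta p (t i * (t j)⁻¹) *
        (betaTelescoper p q t (q⁻¹ * z) - betaTelescoper p q t z) := by
  have ht0 := ne_zero_of_mem_balancedParams hp0 ht
  rw [betaIntegrand_update_mul hp hq hq0 ht0 ht.1 hz,
    betaIntegrand_update_mul hp hq hq0 ht0 ht.1 hz, betaTelescoper_inv_mul hp hq hq0 ht0 ht.1 hz,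
    betaTelescoper_of_norm_eq_one hp hq hq0 ht0 ht.1 hz, betaIntegrand, betaWeight]
  linear_combination (∏ k, gammaPair p q (t k) z) * theta q (z ^ 2)⁻¹ *
    theta_six_term hp hp0 hz ht hij

lemma ellipticBeta_update_mul {i j : Fin 6} (hp : ‖p‖ < 1) (hp0 : p ≠ 0) (hq : ‖q‖ < 1)
    (hq0 : q ≠ 0) (ht : t ∈ balancedParams p) (hij : i ≠ j) :
    (∏ k ∈ {i, j}ᶜ, theta p (t j * t k)) * ellipticBeta p q (Function.update t i (q * t i)) =
      (∏ k ∈ {i, j}ᶜ, theta p (t i * t k)) *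
        ellipticBeta p q (Function.update t j (q * t j)) := by
  have integrable (c : ℂ) (k : Fin 6) : CircleIntegrable
      (fun z => c * betaIntegrand p q (Function.update t k (q * t k)) z) 0 1 :=
    have ht_update := mem_balancedParams_update hq ht k
    (circleIntegrable_betaIntegrand hp hq
      (ne_zero_of_mem_balancedParams (mul_ne_zero hp0 hq0) ht_update)
      ht_update.1).const_fun_smul (a := c)
  have average := circleAverage_congr_of_norm_eq_one fun z hz =>
    betaIntegrand_update_mul_sub hp hp0 hq hq0 ht hij hz
  rw [circleAverage_fun_sub (integrable _ i) (integrable _ j), circleAverage_const_mul,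
    circleAverage_const_mul, circleAverage_const_mul, circleAverage_betaTelescoper_inv_mul_sub hp hq
      hq0 (ne_zero_of_mem_balancedParams hp0 ht) ht.1, mul_zero] at average
  exact sub_eq_zero.1 average

end Telescoping

section Normalizer

lemma betaNormalizer_ne_zero {t : Fin 6 → ℂ} (hp : ‖p‖ < 1) (hp0 : p ≠ 0) (hq : ‖q‖ < 1)
    (hq0 : q ≠ 0) (ht : t ∈ balancedParams (p * q)) : betaNormalizer p q t ≠ 0 := by
  refine Finset.prod_ne_zero_iff.2 fun s hs => ?_
  obtain ⟨i, j, hij, rfl⟩ := Finset.card_eq_two.1 (Finset.mem_powersetCard.1 hs).2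
  rw [Finset.prod_pair hij]
  exact egamma_ne_zero hp hq hp0 hq0 (norm_mul_lt_one (ht.1 i) (ht.1 j))
    (norm_lt_norm_mul_of_mem_balancedParams (mul_ne_zero hp0 hq0) ht hij)

lemma prod_powersetCard_two_filter_mem {ι M : Type*} [Fintype ι] [DecidableEq ι] [CommMonoid M]
    (f : Finset ι → M) (i : ι) :
    ∏ s ∈ Finset.powersetCard 2 Finset.univ with i ∈ s, f s = ∏ k ∈ {i}ᶜ, f {i, k} := by
  symm
  refine Finset.prod_bij (fun k _ => {i, k}) ?_ ?_ ?_ fun _ _ => rfl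
  · intro k hk
    have hik : i ≠ k := by simpa [eq_comm] using hk
    simp [Finset.card_pair hik]
  · intro k hk l _ h
    have := h ▸ Finset.mem_insert_of_mem (Finset.mem_singleton_self k)
    simp_all
  · intro s hs
    obtain ⟨hs, hi⟩ := Finset.mem_filter.1 hs
    obtain ⟨k, hk⟩ := Finset.card_eq_one.1 ((Finset.card_erase_of_mem hi).trans
      (by rw [(Finset.mem_powersetCard.1 hs).2]))
    have hki : k ∈ s.erase i := hk ▸ Finset.mem_singleton_self k
    exact ⟨k, by simpa using (Finset.ne_of_mem_erase hki), by rw [← hk, Finset.insert_erase hi]⟩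

lemma betaNormalizer_update_mul {t : Fin 6 → ℂ} (hp : ‖p‖ < 1) (hp0 : p ≠ 0) (hq : ‖q‖ < 1)
    (hq0 : q ≠ 0) (ht : t ∈ balancedParams p) (i : Fin 6) :
    betaNormalizer p q (Function.update t i (q * t i)) =
      (∏ k ∈ {i}ᶜ, theta p (t i * t k)) * betaNormalizer p q t := by
  have ht0 := ne_zero_of_mem_balancedParams hp0 ht
  simp only [betaNormalizer, ← Finset.prod_filter_mul_prod_filter_not
    (Finset.powersetCard 2 Finset.univ) (i ∈ ·), prod_powersetCard_two_filter_mem]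
  rw [← mul_assoc, ← Finset.prod_mul_distrib]
  congr 1
  · refine Finset.prod_congr rfl fun k hk => ?_
    have hik : i ≠ k := by simpa [eq_comm] using hk
    rw [Finset.prod_pair hik, Finset.prod_pair hik, Function.update_self,
      Function.update_of_ne hik.symm, mul_assoc,
      egamma_mul_left hp hq hq0 (mul_ne_zero (ht0 i) (ht0 k)) (norm_mul_lt_one (ht.1 i) (ht.1 k))]
  · refine Finset.prod_congr rfl fun s hs => ?_
    rw [Finset.prod_update_of_notMem (Finset.mem_filter.1 hs).2]

lemma betaRatio_update_mul {t : Fin 6 → ℂ} {i j : Fin 6} (hp : ‖p‖ < 1) (hp0 : p ≠ 0)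
    (hq : ‖q‖ < 1) (hq0 : q ≠ 0) (ht : t ∈ balancedParams p) (hij : i ≠ j) :
    betaRatio p q (Function.update t i (q * t i)) =
      betaRatio p q (Function.update t j (q * t j)) := by
  have pairs (i j : Fin 6) (hij : i ≠ j) : ∏ k ∈ {i}ᶜ, theta p (t i * t k) =
      theta p (t i * t j) * ∏ k ∈ {i, j}ᶜ, theta p (t i * t k) := by
    rw [← Finset.mul_prod_erase _ _ (by simpa [eq_comm] using hij : j ∈ ({i} : Finset (Fin 6))ᶜ)]
    congr 2
    ext k
    simp [and_comm]
  have normalizer_ne_zero (k : Fin 6) := betaNormalizer_ne_zero hp hp0 hq hq0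
    (mem_balancedParams_update hq ht k)
  rw [betaRatio, betaRatio, div_eq_div_iff (normalizer_ne_zero i) (normalizer_ne_zero j),
    betaNormalizer_update_mul hp hp0 hq hq0 ht, betaNormalizer_update_mul hp hp0 hq hq0 ht,
    pairs i j hij, pairs j i hij.symm, mul_comm (t j), Finset.pair_comm j i]
  linear_combination theta p (t i * t j) * betaNormalizer p q t *
    ellipticBeta_update_mul hp hp0 hq hq0 ht hij

end Normalizer

end BetaIntegral

section ParametricCircleAverage

lemma differentiableAt_circleAverage {F : ℂ → ℂ → ℂ} {U : Set ℂ} (hU : IsOpen U)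
    (hF : ∀ w ∈ U, ∀ z : ℂ, ‖z‖ = 1 → DifferentiableAt ℂ (Function.uncurry F) (w, z))
    {w₀ : ℂ} (hw₀ : w₀ ∈ U) : DifferentiableAt ℂ (fun w => circleAverage (F w) 0 1) w₀ := by
  have norm_circleMap (u : ℝ) : ‖circleMap 0 1 u‖ = 1 := by simp
  have continuous (w : ℂ) (hw : w ∈ U) : Continuous fun u => F w (circleMap 0 1 u) :=
    continuous_iff_continuousAt.2 fun u => ((hF w hw _ (norm_circleMap u)).continuousAt).comp
      (f := fun u => (w, circleMap 0 1 u)) (by fun_prop)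
  have differentiableAt (w : ℂ) (hw : w ∈ U) (u : ℝ) :
      DifferentiableAt ℂ (fun w => F w (circleMap 0 1 u)) w :=
    (hF w hw _ (norm_circleMap u)).comp w (f := fun w => (w, circleMap 0 1 u)) (by fun_prop)
  obtain ⟨R, hR, hRU⟩ := Metric.nhds_basis_closedBall.mem_iff.1 (hU.mem_nhds hw₀)
  obtain ⟨C, hC⟩ := ((isCompact_closedBall w₀ R).prod
    (isCompact_sphere (0 : ℂ) 1)).exists_bound_of_continuousOn (f := Function.uncurry F)
      fun x hx => (hF x.1 (hRU hx.1) x.2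
        (mem_sphere_zero_iff_norm.1 hx.2)).continuousAt.continuousWithinAt
  have closedBall_subset {w : ℂ} (hw : w ∈ Metric.ball w₀ (R / 2)) :
      Metric.closedBall w (R / 2) ⊆ Metric.closedBall w₀ R :=
    Metric.closedBall_subset_closedBall' (by linarith [Metric.mem_ball.1 hw])
  have hasDerivAt {w : ℂ} (hw : w ∈ U) (u : ℝ) : HasDerivAt (fun w => F w (circleMap 0 1 u))
      (fderiv ℂ (Function.uncurry F) (w, circleMap 0 1 u) (1, 0)) w :=
    (hF w hw _ (norm_circleMap u)).hasFDerivAt.comp_hasDerivAt w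
      (f := fun w => (w, circleMap 0 1 u)) ((hasDerivAt_id w).prodMk (hasDerivAt_const w _))
  have mem_U {w : ℂ} (hw : w ∈ Metric.ball w₀ (R / 2)) : w ∈ U :=
    hRU (closedBall_subset hw (Metric.mem_closedBall_self (by positivity)))
  refine (intervalIntegral.hasDerivAt_integral_of_dominated_loc_of_deriv_le
    (bound := fun _ => C / (R / 2)) (Metric.ball_mem_nhds w₀ (half_pos hR))
    ?_ ((continuous w₀ hw₀).intervalIntegrable _ _) ?_
    (.of_forall fun u _ w hw => ?_) intervalIntegrable_const
    (.of_forall fun u _ w hw => hasDerivAt (mem_U hw) u)).2.differentiableAt.const_smul _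
  · filter_upwards [hU.mem_nhds hw₀] with w hw using (continuous w hw).aestronglyMeasurable
  · exact ((measurable_fderiv_apply_const ℂ (Function.uncurry F) (1, 0)).comp
      (by fun_prop : Measurable fun u => (w₀, circleMap 0 1 u))).aestronglyMeasurable
  · rw [← (hasDerivAt (mem_U hw) u).deriv]
    exact norm_deriv_le_of_forall_mem_sphere_norm_le (half_pos hR)
      (DifferentiableOn.diffContOnCl fun v hv => (differentiableAt v (hRU (closedBall_subset hw
        (Metric.closure_ball_subset_closedBall hv))) u).differentiableWithinAt)
      fun v hv => hC (v, _) ⟨closedBall_subset hw (Metric.sphere_subset_closedBall hv), by simp⟩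

end ParametricCircleAverage

section BetaRatio

variable {p q : ℂ}

lemma differentiableAt_ellipticBeta {t : ℂ → Fin 6 → ℂ} {U : Set ℂ} (hp : ‖p‖ < 1) (hq : ‖q‖ < 1)
    (hU : IsOpen U) (ht : DifferentiableOn ℂ t U) (ht0 : ∀ w ∈ U, ∀ i, t w i ≠ 0)
    (ht1 : ∀ w ∈ U, ∀ i, ‖t w i‖ < 1) {w : ℂ} (hw : w ∈ U) :
    DifferentiableAt ℂ (fun w => ellipticBeta p q (t w)) w :=
  differentiableAt_circleAverage (F := fun w => betaIntegrand p q (t w)) hU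
    (fun w hw z hz => differentiableAt_betaIntegrand (x := (w, z)) hp hq
      ((ht.differentiableAt (hU.mem_nhds hw)).fun_comp' (w, z) differentiableAt_fst)
      differentiableAt_snd (ht0 w hw) (ht1 w hw) hz) hw

lemma differentiableAt_betaNormalizer {t : ℂ → Fin 6 → ℂ} {w : ℂ} (hp : ‖p‖ < 1) (hq : ‖q‖ < 1)
    (ht : DifferentiableAt ℂ t w) (ht0 : ∀ i, t w i ≠ 0) (ht1 : ∀ i, ‖t w i‖ < 1) :
    DifferentiableAt ℂ (fun w => betaNormalizer p q (t w)) w := by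
  refine DifferentiableAt.fun_finsetProd fun s hs => ?_
  obtain ⟨i, j, hij, rfl⟩ := Finset.card_eq_two.1 (Finset.mem_powersetCard.1 hs).2
  simp only [Finset.prod_pair hij]
  exact (differentiableAt_egamma hp hq (mul_ne_zero (ht0 i) (ht0 j))
    (norm_mul_lt_one (ht1 i) (ht1 j))).fun_comp' w
    ((differentiableAt_pi.1 ht i).mul (differentiableAt_pi.1 ht j))

lemma differentiableOn_betaRatio {t : ℂ → Fin 6 → ℂ} {U : Set ℂ} (hp : ‖p‖ < 1) (hp0 : p ≠ 0)
    (hq : ‖q‖ < 1) (hq0 : q ≠ 0) (hU : IsOpen U) (ht : DifferentiableOn ℂ t U)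
    (ht_mem : Set.MapsTo t U (balancedParams (p * q))) :
    DifferentiableOn ℂ (fun w => betaRatio p q (t w)) U := by
  have ht0 (w : ℂ) (hw : w ∈ U) := ne_zero_of_mem_balancedParams (mul_ne_zero hp0 hq0) (ht_mem hw)
  intro w hw
  exact ((differentiableAt_ellipticBeta hp hq hU ht ht0 (fun w hw => (ht_mem hw).1) hw).fun_div
    (differentiableAt_betaNormalizer hp hq (ht.differentiableAt (hU.mem_nhds hw)) (ht0 w hw)
      (ht_mem hw).1) (betaNormalizer_ne_zero hp hp0 hq hq0 (ht_mem hw))).differentiableWithinAt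

end BetaRatio

section Constancy

variable {p q : ℂ}

lemma eq_of_periodic_of_mem_annulus {f : ℂ → ℂ} {r : ℝ} (hq0 : q ≠ 0) (hq : ‖q‖ < 1) (hr : 0 ≤ r)
    (hrq : r < ‖q‖) (hf : DifferentiableOn ℂ f (annulus r 1))
    (hshift : ∀ z : ℂ, r < ‖q * z‖ → ‖z‖ < 1 → f (q * z) = f z) {x y : ℂ}
    (hx : x ∈ annulus r 1) (hy : y ∈ annulus r 1) : f x = f y := by
  obtain ⟨ρ, hrρ, hρ1⟩ := exists_between ((div_lt_one (norm_pos_iff.2 hq0)).2 hrq)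
  have hρ : 0 < ρ := (div_nonneg hr (norm_nonneg q)).trans_lt hrρ
  have hrqρ : r < ‖q‖ * ρ := (div_lt_iff₀' (norm_pos_iff.2 hq0)).1 hrρ
  have mapsTo : Set.MapsTo (fun z => (ρ : ℂ) * z) (annulus (r / ρ) ρ⁻¹) (annulus r 1) := by
    rintro z ⟨hrz, hzρ⟩
    simp only [annulus, Set.mem_ofPred_eq, norm_mul, norm_real, Real.norm_of_nonneg hρ.le]
    exact ⟨(div_lt_iff₀' hρ).1 hrz, (lt_inv_mul_iff₀ hρ).1 (by rwa [mul_one])⟩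
  have scaled := eqOn_circleAverage_of_periodic hq0 hq (div_nonneg hr hρ.le)
    ((div_lt_iff₀ hρ).2 hrqρ) ((one_lt_inv₀ hρ).2 hρ1) (hf.comp (by fun_prop) mapsTo)
    fun z hz => by
      have norm_scaled : ‖(ρ : ℂ) * z‖ = ρ := by
        rw [norm_mul, hz, mul_one, norm_real, Real.norm_of_nonneg hρ.le]
      rw [Function.comp_apply, mul_left_comm]
      exact hshift _ (by rwa [norm_mul, norm_scaled]) (by rwa [norm_scaled])
  have eq_average (x : ℂ) (hx : x ∈ annulus r 1) :
      f x = circleAverage (f ∘ fun z => (ρ : ℂ) * z) 0 1 := by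
    have hρ0 : (ρ : ℂ) ≠ 0 := ofReal_ne_zero.2 hρ.ne'
    have mem_annulus : (ρ : ℂ)⁻¹ * x ∈ annulus (r / ρ) ρ⁻¹ := by
      simp only [annulus, Set.mem_ofPred_eq, norm_mul, norm_inv, norm_real,
        Real.norm_of_nonneg hρ.le]
      exact ⟨by rw [div_eq_inv_mul]; gcongr; exact hx.1,
        by simpa using mul_lt_mul_of_pos_left hx.2 (inv_pos.2 hρ)⟩
    simpa only [Function.comp_apply, mul_inv_cancel_left₀ hρ0] using scaled mem_annulus
  rw [eq_average x hx, eq_average y hy]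

lemma eq_of_forall_update_eq {ι α β : Type*} [Finite ι] [DecidableEq ι] {S : Set α}
    {f : (ι → α) → β}
    (hf : ∀ s : ι → α, (∀ k, s k ∈ S) → ∀ i, ∀ x ∈ S, f (Function.update s i x) = f s)
    {s s' : ι → α} (hs : ∀ k, s k ∈ S) (hs' : ∀ k, s' k ∈ S) : f s' = f s := by
  cases nonempty_fintype ι
  suffices h : ∀ A : Finset ι, f (A.piecewise s' s) = f s by simpa using h Finset.univ
  intro A
  induction A using Finset.induction_on with
  | empty => rw [Finset.piecewise_empty]
  | insert i A _ ih =>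
    rw [Finset.piecewise_insert, hf _ (fun k => ?_) i _ (hs' i), ih]
    exact Finset.piecewise_cases A s' s (· ∈ S) (hs' k) (hs k)

/-- The parameters `s` supplemented by a sixth one that makes the product of all of them `c`. -/
noncomputable def balancedCompletion (c : ℂ) (s : Fin 5 → ℂ) : Fin 6 → ℂ :=
  Fin.snoc s (c / ∏ i, s i)

lemma balancedCompletion_mem_balancedParams {c : ℂ} {s : Fin 5 → ℂ} (hs : ∀ i, ‖s i‖ < 1)
    (hc : ‖c‖ < ‖∏ i, s i‖) : balancedCompletion c s ∈ balancedParams c := by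
  have hs0 : 0 < ‖∏ i, s i‖ := (norm_nonneg c).trans_lt hc
  refine ⟨fun i => ?_, ?_⟩
  · induction i using Fin.lastCases with
    | last => simpa only [balancedCompletion, Fin.snoc_last, norm_div, div_lt_one hs0] using hc
    | cast i => simpa only [balancedCompletion, Fin.snoc_castSucc] using hs i
  · rw [Fin.prod_univ_castSucc]
    simp only [balancedCompletion, Fin.snoc_castSucc, Fin.snoc_last,
      mul_div_cancel₀ _ (norm_pos_iff.1 hs0)]

lemma betaRatio_balancedCompletion_update_mul {s : Fin 5 → ℂ} (hp : ‖p‖ < 1) (hp0 : p ≠ 0)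
    (hq : ‖q‖ < 1) (hq0 : q ≠ 0) (hs : ∀ i, ‖s i‖ < 1) (hps : ‖p‖ < ‖∏ i, s i‖) (i : Fin 5) :
    betaRatio p q (balancedCompletion (p * q) (Function.update s i (q * s i))) =
      betaRatio p q (balancedCompletion (p * q) s) := by
  have shift := betaRatio_update_mul hp hp0 hq hq0 (balancedCompletion_mem_balancedParams hs hps)
    (Fin.castSucc_lt_last i).ne
  have update_castSucc : balancedCompletion (p * q) (Function.update s i (q * s i)) =
      Function.update (balancedCompletion p s) i.castSucc (q * s i) := by
    rw [balancedCompletion, balancedCompletion, Fin.snoc_update, Finset.prod_update_of_mem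
      (Finset.mem_univ i), mul_assoc, Finset.sdiff_singleton_eq_erase,
      Finset.mul_prod_erase _ _ (Finset.mem_univ i), mul_comm p, mul_div_mul_left _ _ hq0]
  have update_last : balancedCompletion (p * q) s =
      Function.update (balancedCompletion p s) (Fin.last 5) (q * (p / ∏ i, s i)) := by
    rw [balancedCompletion, balancedCompletion, Fin.update_snoc_last, mul_comm p, mul_div_assoc]
  rw [update_castSucc, update_last]
  simpa only [balancedCompletion, Fin.snoc_castSucc, Fin.snoc_last] using shift

lemma differentiableOn_balancedCompletion {c : ℂ} {s : ℂ → Fin 5 → ℂ} {U : Set ℂ}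
    (hs : DifferentiableOn ℂ s U) (hs0 : ∀ x ∈ U, ∏ i, s x i ≠ 0) :
    DifferentiableOn ℂ (fun x => balancedCompletion c (s x)) U := by
  refine differentiableOn_pi.2 fun i => ?_
  induction i using Fin.lastCases with
  | last =>
    simp only [balancedCompletion, Fin.snoc_last]
    exact (differentiableOn_const c).div
      (.fun_finsetProd fun i _ => differentiableOn_pi.1 hs i) hs0
  | cast i => simpa only [balancedCompletion, Fin.snoc_castSucc] using differentiableOn_pi.1 hs i

lemma betaRatio_balancedCompletion_update {s : Fin 5 → ℂ} {i : Fin 5} {x y : ℂ} (hp : ‖p‖ < 1)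
    (hp0 : p ≠ 0) (hq : ‖q‖ < 1) (hq0 : q ≠ 0) (hs : ∀ k, k ≠ i → ‖s k‖ < 1)
    (hps : ‖p‖ < ‖∏ k ∈ {i}ᶜ, s k‖) (hx : x ∈ annulus (‖p * q‖ / ‖∏ k ∈ {i}ᶜ, s k‖) 1)
    (hy : y ∈ annulus (‖p * q‖ / ‖∏ k ∈ {i}ᶜ, s k‖) 1) :
    betaRatio p q (balancedCompletion (p * q) (Function.update s i x)) =
      betaRatio p q (balancedCompletion (p * q) (Function.update s i y)) := by
  have prod_pos : 0 < ‖∏ k ∈ {i}ᶜ, s k‖ := (norm_nonneg p).trans_lt hps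
  have norm_prod (x : ℂ) :
      ‖∏ k, Function.update s i x k‖ = ‖x‖ * ‖∏ k ∈ {i}ᶜ, s k‖ := by
    rw [Finset.prod_update_of_mem (Finset.mem_univ i), norm_mul, Finset.compl_eq_univ_sdiff]
  have norm_update {x : ℂ} (hx : ‖x‖ < 1) : ∀ k, ‖Function.update s i x k‖ < 1 :=
    (Function.forall_update_iff s (p := fun _ z => ‖z‖ < 1)).2 ⟨hx, hs⟩
  have norm_prod_lt {x : ℂ} (hx : x ∈ annulus (‖p * q‖ / ‖∏ k ∈ {i}ᶜ, s k‖) 1) :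
      ‖p * q‖ < ‖∏ k, Function.update s i x k‖ := by
    rw [norm_prod]
    exact (div_lt_iff₀ prod_pos).1 hx.1
  refine eq_of_periodic_of_mem_annulus
    (f := fun x => betaRatio p q (balancedCompletion (p * q) (Function.update s i x))) hq0 hq
    (by positivity) ?_ ?_ (fun z hz hz1 => ?_) hx hy
  · rw [div_lt_iff₀ prod_pos, norm_mul, mul_comm]
    exact mul_lt_mul_of_pos_left hps (norm_pos_iff.2 hq0)
  · exact differentiableOn_betaRatio hp hp0 hq hq0 (isOpen_annulus _ _)
      (differentiableOn_balancedCompletion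
        (fun x _ => (hasFDerivAt_update s x).differentiableAt.differentiableWithinAt) fun x hx =>
        norm_pos_iff.1 ((norm_nonneg _).trans_lt (norm_prod_lt hx)))
      fun x hx => balancedCompletion_mem_balancedParams (norm_update hx.2) (norm_prod_lt hx)
  · have norm_p_lt : ‖p‖ < ‖∏ k, Function.update s i z k‖ := by
      rw [div_lt_iff₀ prod_pos, norm_mul, norm_mul, mul_comm, mul_assoc] at hz
      rw [norm_prod]
      exact lt_of_mul_lt_mul_left hz (norm_nonneg q)
    simpa using
      betaRatio_balancedCompletion_update_mul hp hp0 hq hq0 (norm_update hz1) norm_p_lt i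

lemma pow_card_lt_norm_prod {ι : Type*} {s : ι → ℂ} {ρ : ℝ} (hρ : 0 < ρ) {A : Finset ι}
    (hA : A.Nonempty) (hs : ∀ k ∈ A, ρ < ‖s k‖) : ρ ^ A.card < ‖∏ k ∈ A, s k‖ := by
  rw [norm_prod, ← Finset.prod_const]
  exact Finset.prod_lt_prod_of_nonempty (fun _ _ => hρ) hs hA

lemma betaRatio_balancedCompletion_eq {ρ : ℝ} {s s' : Fin 5 → ℂ} (hp : ‖p‖ < 1) (hp0 : p ≠ 0)
    (hq : ‖q‖ < 1) (hq0 : q ≠ 0) (hρ : 0 < ρ) (hpρ : ‖p‖ ≤ ρ ^ 5) (hs : ∀ k, s k ∈ annulus ρ 1)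
    (hs' : ∀ k, s' k ∈ annulus ρ 1) :
    betaRatio p q (balancedCompletion (p * q) s') =
      betaRatio p q (balancedCompletion (p * q) s) := by
  refine eq_of_forall_update_eq (f := fun s => betaRatio p q (balancedCompletion (p * q) s))
    (fun s hs i x hx => ?_) hs hs'
  have hρ1 : ρ < 1 := (hs i).1.trans (hs i).2
  have pow_lt : ρ ^ 4 < ‖∏ k ∈ {i}ᶜ, s k‖ := by
    simpa [Finset.card_compl] using pow_card_lt_norm_prod hρ (A := {i}ᶜ)
      (Finset.card_pos.1 (by simp [Finset.card_compl])) fun k _ => (hs k).1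
  have norm_mul_lt : ‖p * q‖ < ρ * ‖∏ k ∈ {i}ᶜ, s k‖ := calc
    ‖p * q‖ ≤ ρ ^ 5 := by
      rw [norm_mul]
      exact (mul_le_of_le_one_right (norm_nonneg p) hq.le).trans hpρ
    _ = ρ * ρ ^ 4 := by ring
    _ < ρ * ‖∏ k ∈ {i}ᶜ, s k‖ := by gcongr
  have mem_annulus {x : ℂ} (hx : x ∈ annulus ρ 1) :
      x ∈ annulus (‖p * q‖ / ‖∏ k ∈ {i}ᶜ, s k‖) 1 :=
    ⟨((div_lt_iff₀ ((pow_pos hρ 4).trans pow_lt)).2 norm_mul_lt).trans hx.1, hx.2⟩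
  simpa using betaRatio_balancedCompletion_update hp hp0 hq hq0 (fun k _ => (hs k).2)
    ((hpρ.trans (pow_le_pow_of_le_one hρ.le hρ1.le (by norm_num))).trans_lt pow_lt)
    (mem_annulus hx) (mem_annulus (hs i))

lemma betaRatio_eq_of_lt_norm {ρ : ℝ} {t t' : Fin 6 → ℂ} (hp : ‖p‖ < 1) (hp0 : p ≠ 0)
    (hq : ‖q‖ < 1) (hq0 : q ≠ 0) (hρ : 0 < ρ) (hpρ : ‖p‖ ≤ ρ ^ 5)
    (ht : t ∈ balancedParams (p * q)) (ht' : t' ∈ balancedParams (p * q))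
    (htρ : ∀ i : Fin 5, ρ < ‖t i.castSucc‖) (htρ' : ∀ i : Fin 5, ρ < ‖t' i.castSucc‖) :
    betaRatio p q t' = betaRatio p q t := by
  have completion {t : Fin 6 → ℂ} (ht : t ∈ balancedParams (p * q)) :
      balancedCompletion (p * q) (Fin.init t) = t := by
    have ht0 := ne_zero_of_mem_balancedParams (mul_ne_zero hp0 hq0) ht
    rw [balancedCompletion, ← ht.2, Fin.prod_univ_castSucc]
    simp only [Fin.init, mul_div_cancel_left₀ _ (Finset.prod_ne_zero_iff.2 fun _ _ => ht0 _)]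
    exact Fin.snoc_init_self t
  simpa only [completion ht, completion ht'] using betaRatio_balancedCompletion_eq hp hp0 hq hq0 hρ
    hpρ (s := Fin.init t) (s' := Fin.init t') (fun k => ⟨htρ k, ht.1 _⟩) fun k => ⟨htρ' k, ht'.1 _⟩

lemma isPreconnected_setOf_re_add_mul_lt {ι : Type*} (b c : ι → ℂ) (r : ℝ) :
    IsPreconnected {ζ : ℂ | ∀ i, (b i + ζ * c i).re < r} := by
  have re_linear (i : ι) : IsLinearMap ℝ fun ζ : ℂ => (ζ * c i).re :=
    (reLm ∘ₗ LinearMap.mulRight ℝ (c i)).isLinear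
  simp only [add_re, ← lt_sub_iff_add_lt', Set.ofPred_forall]
  exact (convex_iInter fun i => convex_halfSpace_lt (re_linear i) _).isPreconnected

lemma betaRatio_exp_eq {ρ : ℝ} {b x : Fin 6 → ℂ} (hp : ‖p‖ < 1) (hp0 : p ≠ 0) (hq : ‖q‖ < 1)
    (hq0 : q ≠ 0) (hρ : 0 < ρ) (hpρ : ‖p‖ ≤ ρ ^ 5) (hx : ∀ i, (x i).re < 0)
    (hb : ∀ i, (b i).re < 0) (hx_sum : cexp (∑ i, x i) = p * q) (hb_sum : ∑ i, b i = ∑ i, x i)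
    (hbρ : ∀ i : Fin 5, ρ < ‖cexp (b i.castSucc)‖) :
    betaRatio p q (fun i => cexp (x i)) = betaRatio p q fun i => cexp (b i) := by
  set T : ℂ → Fin 6 → ℂ := fun ζ i => cexp (b i + ζ * (x i - b i)) with T_def
  set U : Set ℂ := {ζ | ∀ i, (b i + ζ * (x i - b i)).re < 0} with U_def
  have isOpen_U : IsOpen U := by
    simp only [U_def, Set.ofPred_forall]
    exact isOpen_iInter_of_finite fun i => isOpen_lt (by fun_prop) continuous_const
  have mapsTo : Set.MapsTo T U (balancedParams (p * q)) := fun ζ hζ =>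
    ⟨fun i => by simpa [T_def, Complex.norm_exp] using hζ i, by
      rw [T_def, ← Complex.exp_sum, Finset.sum_add_distrib, ← Finset.mul_sum,
        Finset.sum_sub_distrib, hb_sum, sub_self, mul_zero, add_zero, hx_sum]⟩
  have zero_mem : (0 : ℂ) ∈ U := fun i => by simpa using hb i
  have one_mem : (1 : ℂ) ∈ U := fun i => by simpa using hx i
  have analytic : AnalyticOnNhd ℂ (fun ζ => betaRatio p q (T ζ)) U :=
    (differentiableOn_betaRatio hp hp0 hq hq0 isOpen_U (by fun_prop) mapsTo).analyticOnNhd isOpen_U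
  have lt_norm_zero (i : Fin 5) : ρ < ‖T 0 i.castSucc‖ := by simpa [T_def] using hbρ i
  have eventually_lt_norm : ∀ᶠ ζ in 𝓝 0, ∀ i : Fin 5, ρ < ‖T ζ i.castSucc‖ :=
    eventually_all.2 fun i => (Continuous.tendsto (by fun_prop) 0).eventually_const_lt
      (lt_norm_zero i)
  have eventually_eq : (fun ζ => betaRatio p q (T ζ)) =ᶠ[𝓝 0] fun _ => betaRatio p q (T 0) := by
    filter_upwards [isOpen_U.mem_nhds zero_mem, eventually_lt_norm] with ζ hζ hρζ
    exact betaRatio_eq_of_lt_norm hp hp0 hq hq0 hρ hpρ (mapsTo zero_mem) (mapsTo hζ)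
      lt_norm_zero hρζ
  simpa [T_def] using analytic.eqOn_of_preconnected_of_eventuallyEq analyticOnNhd_const
    (isPreconnected_setOf_re_add_mul_lt b (fun i => x i - b i) 0) zero_mem eventually_eq one_mem

lemma exists_sum_eq_and_lt_re {n : ℕ} {r : ℝ} {x : Fin (n + 1) → ℂ} (hr : r < 0)
    (hx : ∀ i, (x i).re < 0) : ∃ b : Fin (n + 1) → ℂ, ∑ i, b i = ∑ i, x i ∧
      (∀ i, (b i).re < 0) ∧ ∀ i : Fin n, r < (b i.castSucc).re := by
  have sum_re_neg : (∑ i, x i).re < 0 := by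
    rw [re_sum]
    exact Finset.sum_neg (fun i _ => hx i) Finset.univ_nonempty
  obtain ⟨η, hη, hη0⟩ : ∃ η, max r ((∑ i, x i).re / (n + 1)) < η ∧ η < 0 :=
    exists_between (max_lt hr (div_neg_of_neg_of_pos sum_re_neg (by positivity)))
  obtain ⟨hrη, hxη⟩ := max_lt_iff.1 hη
  rw [div_lt_iff₀ (by positivity)] at hxη
  refine ⟨Fin.snoc (fun _ => (η : ℂ)) (∑ i, x i - n * η), ?_, fun i => ?_, fun i => ?_⟩
  · rw [Fin.sum_univ_castSucc]
    simp
  · induction i using Fin.lastCases with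
    | last =>
      simp only [Fin.snoc_last, sub_re, mul_re, natCast_re, natCast_im, ofReal_re, zero_mul]
      linarith
    | cast i => simpa using hη0
  · simpa using hrη

lemma exists_betaRatio_eq_of_mem_balancedParams {ρ : ℝ} {t : Fin 6 → ℂ} (hp : ‖p‖ < 1)
    (hp0 : p ≠ 0) (hq : ‖q‖ < 1) (hq0 : q ≠ 0) (hρ : 0 < ρ) (hρ1 : ρ < 1) (hpρ : ‖p‖ ≤ ρ ^ 5)
    (ht : t ∈ balancedParams (p * q)) :
    ∃ t' ∈ balancedParams (p * q), (∀ i : Fin 5, ρ < ‖t' i.castSucc‖) ∧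
      betaRatio p q t = betaRatio p q t' := by
  have ht0 := ne_zero_of_mem_balancedParams (mul_ne_zero hp0 hq0) ht
  obtain ⟨x, rfl⟩ : ∃ x : Fin 6 → ℂ, (fun i => cexp (x i)) = t :=
    ⟨fun i => Complex.log (t i), funext fun i => Complex.exp_log (ht0 i)⟩
  have x_re (i : Fin 6) : (x i).re < 0 := by simpa [Complex.norm_exp] using ht.1 i
  have exp_sum_x : cexp (∑ i, x i) = p * q := by rw [Complex.exp_sum, ht.2]
  obtain ⟨b, b_sum, b_re, hb⟩ := exists_sum_eq_and_lt_re (Real.log_neg hρ hρ1) x_re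
  have lt_norm (i : Fin 5) : ρ < ‖cexp (b i.castSucc)‖ := by
    rw [Complex.norm_exp, ← Real.log_lt_iff_lt_exp hρ]
    exact hb i
  refine ⟨fun i => cexp (b i), ⟨fun i => by simpa [Complex.norm_exp] using b_re i, ?_⟩, lt_norm,
    betaRatio_exp_eq hp hp0 hq hq0 hρ hpρ x_re b_re exp_sum_x b_sum lt_norm⟩
  rw [← Complex.exp_sum, b_sum, exp_sum_x]

lemma betaRatio_eq_of_mem_balancedParams {t t' : Fin 6 → ℂ} (hp : ‖p‖ < 1) (hp0 : p ≠ 0)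
    (hq : ‖q‖ < 1) (hq0 : q ≠ 0) (ht : t ∈ balancedParams (p * q))
    (ht' : t' ∈ balancedParams (p * q)) : betaRatio p q t = betaRatio p q t' := by
  obtain ⟨ρ, hpρ, hρ0, hρ1⟩ : ∃ ρ : ℝ, ‖p‖ ≤ ρ ^ 5 ∧ 0 < ρ ∧ ρ < 1 :=
    ⟨‖p‖ ^ (5⁻¹ : ℝ), by rw [← Real.rpow_mul_natCast (norm_nonneg p)]; norm_num,
      Real.rpow_pos_of_pos (norm_pos_iff.2 hp0) _,
      Real.rpow_lt_one (norm_nonneg p) hp (by norm_num)⟩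
  obtain ⟨s, hs, hsρ, hts⟩ :=
    exists_betaRatio_eq_of_mem_balancedParams hp hp0 hq hq0 hρ0 hρ1 hpρ ht
  obtain ⟨s', hs', hsρ', hts'⟩ :=
    exists_betaRatio_eq_of_mem_balancedParams hp hp0 hq hq0 hρ0 hρ1 hpρ ht'
  rw [hts, hts', betaRatio_eq_of_lt_norm hp hp0 hq hq0 hρ0 hpρ hs' hs hsρ' hsρ]

end Constancy

section PoissonPeak

lemma norm_circleAverage_le {E : Type*} [NormedAddCommGroup E] [NormedSpace ℝ E] (f : ℂ → E)
    (c : ℂ) (R : ℝ) : ‖circleAverage f c R‖ ≤ circleAverage (fun z => ‖f z‖) c R := by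
  rw [circleAverage, circleAverage, norm_smul, norm_of_nonneg (by positivity), smul_eq_mul]
  gcongr
  exact intervalIntegral.norm_integral_le_integral_norm two_pi_pos.le

lemma circleAverage_comp_sq {E : Type*} [NormedAddCommGroup E] [NormedSpace ℝ E] {f : ℂ → E}
    (hf : CircleIntegrable f 0 1) :
    circleAverage (fun z => f (z ^ 2)) 0 1 = circleAverage f 0 1 := by
  have periodic : Function.Periodic (fun u => f (circleMap 0 1 u)) (2 * π) := fun u => by
    simp only [periodic_circleMap 0 1 u]
  have double := periodic.intervalIntegral_add_zsmul_eq 2 0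
    fun _ _ => periodic.intervalIntegrable₀ two_pi_pos.ne' hf _ _
  have circleMap_sq (u : ℝ) : circleMap 0 1 u ^ 2 = circleMap 0 1 (2 * u) := by
    rw [sq, circleMap_zero_mul, one_mul, two_mul]
  simp only [zero_add, two_zsmul] at double
  simp only [circleAverage, circleMap_sq]
  rw [intervalIntegral.integral_comp_mul_left (fun u => f (circleMap 0 1 u)) two_ne_zero,
    mul_zero, two_mul (2 * π), double, ← two_smul ℝ, inv_smul_smul₀ two_ne_zero]

lemma norm_circleAverage_smul_sub_le {E : Type*} [NormedAddCommGroup E] [NormedSpace ℝ E]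
    [CompleteSpace E] {K ψ : ℂ → ℝ} {G : ℂ → E} {g : E} {ε C δ : ℝ} (hC : 0 ≤ C)
    (hK : ContinuousOn K (Metric.sphere 0 1)) (hG : ContinuousOn G (Metric.sphere 0 1))
    (hK0 : ∀ z : ℂ, ‖z‖ = 1 → 0 ≤ K z) (hK1 : circleAverage K 0 1 = 1)
    (hKψ : ∀ z : ℂ, ‖z‖ = 1 → K z * ψ z ≤ δ) (hGψ : ∀ z : ℂ, ‖z‖ = 1 → ‖G z - g‖ ≤ ε + C * ψ z) :
    ‖circleAverage (fun z => K z • G z) 0 1 - g‖ ≤ ε + C * δ := by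
  have hK_int := hK.circleIntegrable zero_le_one
  have average_g : circleAverage (fun z => K z • g) 0 1 = g := by
    have comm := ((ContinuousLinearMap.id ℝ ℝ).smulRight g).circleAverage_comp_comm hK_int
    rw [hK1] at comm
    exact comm.trans (one_smul ℝ g)
  have average_bound : circleAverage (fun z => ε * K z + C * δ) 0 1 = ε + C * δ := by
    simp only [← smul_eq_mul ε]
    rw [circleAverage_fun_add hK_int.const_fun_smul (circleIntegrable_const _ _ _),
      circleAverage_const, circleAverage_fun_smul, hK1, smul_eq_mul, mul_one]
  have pointwise (z : ℂ) (hz : z ∈ Metric.sphere 0 |1|) :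
      ‖K z • (G z - g)‖ ≤ ε * K z + C * δ := by
    replace hz : ‖z‖ = 1 := by simpa using hz
    calc ‖K z • (G z - g)‖ = K z * ‖G z - g‖ := by rw [norm_smul, norm_of_nonneg (hK0 z hz)]
      _ ≤ K z * (ε + C * ψ z) := mul_le_mul_of_nonneg_left (hGψ z hz) (hK0 z hz)
      _ = ε * K z + C * (K z * ψ z) := by ring
      _ ≤ ε * K z + C * δ := by gcongr; exact hKψ z hz
  have integrable {f : ℂ → E} (hf : ContinuousOn f (Metric.sphere 0 1)) : CircleIntegrable f 0 1 :=
    hf.circleIntegrable zero_le_one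
  calc ‖circleAverage (fun z => K z • G z) 0 1 - g‖
      = ‖circleAverage (fun z => K z • (G z - g)) 0 1‖ := by
        simp only [smul_sub]
        rw [circleAverage_fun_sub (integrable (by fun_prop)) (integrable (by fun_prop)), average_g]
    _ ≤ circleAverage (fun z => ‖K z • (G z - g)‖) 0 1 := norm_circleAverage_le _ _ _
    _ ≤ circleAverage (fun z => ε * K z + C * δ) 0 1 :=
        circleAverage_mono (ContinuousOn.circleIntegrable zero_le_one (by fun_prop))
          (ContinuousOn.circleIntegrable zero_le_one (by fun_prop)) pointwise
    _ = ε + C * δ := average_bound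

lemma exists_eventually_norm_sub_lt {X Y E : Type*} [TopologicalSpace X] [TopologicalSpace Y]
    [NormedAddCommGroup E] {S : Set Y} {ψ : Y → ℝ} {G : X → Y → E} {g : E} {x₀ : X} {ε : ℝ}
    (hS : IsCompact S) (hψ : Continuous ψ) (hψ0 : ∀ y, 0 ≤ ψ y)
    (hG : ∀ y ∈ S, ContinuousAt (Function.uncurry G) (x₀, y))
    (hg : ∀ y ∈ S, ψ y = 0 → G x₀ y = g) (hε : 0 < ε) :
    ∃ C ≥ 0, ∀ᶠ x in 𝓝 x₀, ∀ y ∈ S, ‖G x y - g‖ < ε + C * ψ y := by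
  have joint : ∀ᶠ Cx in atTop ×ˢ 𝓝 x₀, ∀ y ∈ S, ‖G Cx.2 y - g‖ < ε + Cx.1 * ψ y := by
    suffices ∀ᶠ w in (atTop ×ˢ 𝓝 x₀) ×ˢ 𝓝ˢ S, ‖G w.1.2 w.2 - g‖ < ε + w.1.1 * ψ w.2 from
      this.curry.mono fun _ h => h.self_of_nhdsSet
    refine hS.mem_prod_nhdsSet_of_forall fun y hy => ?_
    have G_lim : Tendsto (fun w : (ℝ × X) × Y => ‖G w.1.2 w.2 - g‖) ((atTop ×ˢ 𝓝 x₀) ×ˢ 𝓝 y)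
        (𝓝 ‖G x₀ y - g‖) :=
      (((hG y hy).tendsto.comp
        ((tendsto_snd.comp tendsto_fst).prodMk_nhds tendsto_snd)).sub_const g).norm
    have ψ_lim : Tendsto (fun w : (ℝ × X) × Y => ψ w.2) ((atTop ×ˢ 𝓝 x₀) ×ˢ 𝓝 y) (𝓝 (ψ y)) :=
      hψ.continuousAt.tendsto.comp tendsto_snd
    have C_lim : Tendsto (fun w : (ℝ × X) × Y => w.1.1) ((atTop ×ˢ 𝓝 x₀) ×ˢ 𝓝 y) atTop :=
      tendsto_fst.comp tendsto_fst
    rcases (hψ0 y).eq_or_lt' with h0 | hpos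
    · rw [hg y hy h0, sub_self, norm_zero] at G_lim
      filter_upwards [G_lim.eventually_lt_const hε, C_lim.eventually_ge_atTop 0] with w hw hC
      exact hw.trans_le (le_add_of_nonneg_right (mul_nonneg hC (hψ0 _)))
    · filter_upwards [G_lim.eventually_lt_const (lt_add_one _),
        (C_lim.atTop_mul_pos hpos ψ_lim).eventually_ge_atTop (‖G x₀ y - g‖ + 1)] with w hw hC
      linarith
  obtain ⟨C, hC, hC0⟩ := (joint.curry.and (eventually_ge_atTop 0)).exists
  exact ⟨C, hC0, hC⟩

lemma poissonKernel_zero_eq (w : ℂ) {z : ℂ} (hz : ‖z‖ = 1) :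
    poissonKernel 0 w z = (1 - ‖w‖ ^ 2) / ‖z - w‖ ^ 2 := by
  simp [poissonKernel_def, hz]

lemma poissonKernel_zero_nonneg {w z : ℂ} (hw : ‖w‖ < 1) (hz : ‖z‖ = 1) :
    0 ≤ poissonKernel 0 w z := by
  rw [poissonKernel_zero_eq w hz]
  exact div_nonneg (sub_nonneg.2 (pow_le_one₀ (norm_nonneg w) hw.le)) (sq_nonneg _)

lemma poissonKernel_mul_norm_add_one_sq_le {r : ℝ} {z : ℂ} (hr0 : 0 ≤ r) (hr : r < 1)
    (hz : ‖z‖ = 1) : poissonKernel 0 (-r) z * ‖z + 1‖ ^ 2 ≤ 4 * (1 - r ^ 2) := by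
  have le_norm : 1 - r ≤ ‖z + r‖ := by
    simpa [hz, abs_of_nonneg hr0] using norm_sub_norm_le z (-r)
  have norm_le : ‖z + 1‖ ≤ 2 * ‖z + r‖ := calc
    ‖z + 1‖ = ‖z + r + ((1 - r : ℝ) : ℂ)‖ := by push_cast; ring_nf
    _ ≤ ‖z + r‖ + (1 - r) := (norm_add_le _ _).trans_eq <| by
      rw [norm_real, norm_of_nonneg (sub_nonneg.2 hr.le)]
    _ ≤ 2 * ‖z + r‖ := by linarith
  have hpos : 0 < ‖z + r‖ := by linarith
  rw [poissonKernel_zero_eq _ hz, sub_neg_eq_add, norm_neg, norm_real, norm_eq_abs, sq_abs,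
    div_mul_eq_mul_div, div_le_iff₀ (by positivity)]
  nlinarith [mul_le_mul_of_nonneg_left (pow_le_pow_left₀ (norm_nonneg _) norm_le 2)
    (by nlinarith : 0 ≤ 1 - r ^ 2)]

lemma continuousOn_poissonKernel_zero {w : ℂ} (hw : ‖w‖ < 1) :
    ContinuousOn (poissonKernel 0 w) (Metric.sphere 0 1) := by
  unfold poissonKernel
  refine ContinuousOn.div (by fun_prop) (by fun_prop) fun z hz => ?_
  have : z ≠ w := by rintro rfl; simp_all
  simpa [sub_eq_zero] using this

lemma circleAverage_poissonKernel_zero {w : ℂ} (hw : ‖w‖ < 1) :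
    circleAverage (poissonKernel 0 w) 0 1 = 1 := by
  have := (diffContOnCl_const (c := (1 : ℂ))).circleAverage_poissonKernel_smul
    (mem_ball_zero_iff.2 hw)
  rw [← ofReal_inj]
  refine (ofRealCLM.circleAverage_comp_comm
    ((continuousOn_poissonKernel_zero hw).circleIntegrable zero_le_one)).symm.trans ?_
  simpa [Pi.smul_def', Function.comp_def] using this

/- As `r → 1` the kernel `z ↦ poissonKernel 0 (-r) (z ^ 2)` concentrates at `z = ±I`. -/
lemma tendsto_circleAverage_poissonKernel_sq_smul {X E : Type*} [TopologicalSpace X]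
    [NormedAddCommGroup E] [NormedSpace ℝ E] [CompleteSpace E] {l : Filter X} {x₀ : X} {r : X → ℝ}
    {G : X → ℂ → E} {g : E} (hl : l ≤ 𝓝 x₀) (hr : ∀ᶠ x in l, r x ∈ Set.Ico 0 1)
    (hr1 : Tendsto r l (𝓝 1)) (hG : ∀ᶠ x in l, ContinuousOn (G x) (Metric.sphere 0 1))
    (hG₀ : ∀ z ∈ Metric.sphere 0 1, ContinuousAt (Function.uncurry G) (x₀, z))
    (hg : ∀ z : ℂ, z ^ 2 = -1 → G x₀ z = g) :
    Tendsto (fun x => circleAverage (fun z => poissonKernel 0 (-r x) (z ^ 2) • G x z) 0 1) l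
      (𝓝 g) := by
  have norm_sq {z : ℂ} (hz : ‖z‖ = 1) : ‖z ^ 2‖ = 1 := by rw [norm_pow, hz, one_pow]
  rw [Metric.tendsto_nhds]
  intro ε hε
  obtain ⟨C, hC, hC_bound⟩ := exists_eventually_norm_sub_lt (isCompact_sphere (0 : ℂ) 1)
    (ψ := fun z => ‖z ^ 2 + 1‖ ^ 2) (by fun_prop) (fun _ => by positivity) hG₀
    (fun z _ hz => hg z (eq_neg_of_add_eq_zero_left (by simpa using hz))) (half_pos hε)
  have error_lim : Tendsto (fun x => ε / 2 + C * (4 * (1 - r x ^ 2))) l (𝓝 (ε / 2)) := by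
    simpa using (((hr1.pow 2).const_sub 1).const_mul 4 |>.const_mul C).const_add (ε / 2)
  filter_upwards [hr, hG, hl hC_bound, error_lim.eventually_lt_const (half_lt_self hε)]
    with x hrx hGx hbound herror
  have norm_lt_one : ‖(-r x : ℂ)‖ < 1 := by simpa [abs_of_nonneg hrx.1] using hrx.2
  have hK := continuousOn_poissonKernel_zero norm_lt_one
  have hK_sq : ContinuousOn (fun z => poissonKernel 0 (-r x) (z ^ 2)) (Metric.sphere 0 1) :=
    hK.comp (by fun_prop) fun z hz => by
      rw [mem_sphere_zero_iff_norm] at hz ⊢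
      exact norm_sq hz
  have hK_sq_one : circleAverage (fun z => poissonKernel 0 (-r x) (z ^ 2)) 0 1 = 1 := by
    rw [circleAverage_comp_sq (hK.circleIntegrable zero_le_one),
      circleAverage_poissonKernel_zero norm_lt_one]
  rw [dist_eq_norm]
  refine (norm_circleAverage_smul_sub_le (ψ := fun z => ‖z ^ 2 + 1‖ ^ 2) hC hK_sq hGx
    (fun z hz => poissonKernel_zero_nonneg norm_lt_one (norm_sq hz)) hK_sq_one (fun z hz => ?_)
    fun z hz => (hbound z (by simpa using hz)).le).trans_lt herror
  exact poissonKernel_mul_norm_add_one_sq_le hrx.1 hrx.2 (norm_sq hz)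

end PoissonPeak

section RegularizedGamma

variable {p q x z a : ℂ}

/-- The function `(1 - x) Γ(x;p,q)` with its removable singularity at `x = 1` removed. -/
noncomputable def egammaReg (p q x : ℂ) : ℂ :=
  qpochPair p q (p * q / x) / (qpoch (p * x) p * qpochPair p q (q * x))

lemma egammaReg_denom_ne_zero (hp : ‖p‖ < 1) (hq : ‖q‖ < 1) (hx : ‖x‖ ≤ 1) :
    qpoch (p * x) p * qpochPair p q (q * x) ≠ 0 := by
  have norm_lt {c : ℂ} (hc : ‖c‖ < 1) : ‖c * x‖ < 1 := by
    rw [norm_mul]; exact mul_lt_one_of_nonneg_of_lt_one_left (norm_nonneg _) hc hx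
  exact mul_ne_zero (qpoch_ne_zero hp (norm_lt hp)) (qpochPair_ne_zero hp hq (norm_lt hq))

lemma egamma_eq_egammaReg_div (hp : ‖p‖ < 1) (hq : ‖q‖ < 1) (hx : ‖x‖ ≤ 1) (hx1 : x ≠ 1) :
    egamma x p q = egammaReg p q x / (1 - x) := by
  have factor : qpochPair p q x = (qpoch (p * x) p * qpochPair p q (q * x)) * (1 - x) := by
    rw [qpochPair_eq_qpoch_mul_right hp hq, qpoch_eq_one_sub_mul hp]
    ring
  have hne : qpochPair p q x ≠ 0 :=
    factor ▸ mul_ne_zero (egammaReg_denom_ne_zero hp hq hx) (sub_ne_zero.2 hx1.symm)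
  rw [egamma_eq_div hp hq hne, factor, egammaReg, div_div]

lemma continuousAt_egammaReg (hp : ‖p‖ < 1) (hq : ‖q‖ < 1) (hx0 : x ≠ 0) (hx : ‖x‖ ≤ 1) :
    ContinuousAt (egammaReg p q) x := by
  have hqpoch := (differentiable_qpoch hp).continuous
  have hqpochPair := (differentiable_qpochPair hp hq).continuous
  exact (hqpochPair.continuousAt.comp (continuousAt_const.div continuousAt_id hx0)).div
    ((hqpoch.comp (continuous_const_mul p)).mul
      (hqpochPair.comp (continuous_const_mul q))).continuousAt
    (egammaReg_denom_ne_zero hp hq hx)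

lemma egammaReg_one (hp : ‖p‖ < 1) (hq : ‖q‖ < 1) :
    egammaReg p q 1 = (qpoch p p * qpoch q q)⁻¹ := by
  have hne : qpochPair p q (p * q) ≠ 0 := qpochPair_ne_zero hp hq (norm_mul_lt_one hp hq)
  rw [egammaReg, div_one, mul_one, mul_one, qpochPair_eq_qpoch_mul_left hp hq q, ← mul_assoc,
    div_mul_cancel_right₀ hne]

lemma egammaReg_neg_one_sq_mul (hp : ‖p‖ < 1) (hq : ‖q‖ < 1) :
    egammaReg p q (-1) ^ 2 * (theta p (-1) * theta q (-1)) = 4 := by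
  have hne : egammaReg p q (-1) ≠ 0 :=
    div_ne_zero (qpochPair_ne_zero hp hq (by simpa using norm_mul_lt_one hp hq))
      (egammaReg_denom_ne_zero hp hq (by simp))
  have weight := egamma_mul_egamma_inv_of_norm_eq_one hp hq (z := -1) (by simp)
  rw [inv_neg_one, egamma_eq_egammaReg_div hp hq (by simp) (by norm_num)] at weight
  rw [← weight]
  field_simp
  norm_num

/-- The product `egammaReg (a z) * egammaReg (a z⁻¹)`, a regularization of `gammaPair`. -/
noncomputable def gammaPairReg (p q a z : ℂ) : ℂ :=
  egammaReg p q (a * z) * egammaReg p q (a * z⁻¹)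

lemma gammaPair_eq_gammaPairReg_div (hp : ‖p‖ < 1) (hq : ‖q‖ < 1) (ha : ‖a‖ < 1) (hz : ‖z‖ = 1) :
    gammaPair p q a z = gammaPairReg p q a z / ((1 - a * z) * (1 - a * z⁻¹)) := by
  have eq_div {w : ℂ} (hw : ‖w‖ = 1) :
      egamma (a * w) p q = egammaReg p q (a * w) / (1 - a * w) := by
    have norm_lt : ‖a * w‖ < 1 := by simpa [hw] using ha
    exact egamma_eq_egammaReg_div hp hq norm_lt.le fun h => by simp [h] at norm_lt
  rw [gammaPair, gammaPairReg, eq_div hz, eq_div (by simpa using hz), div_mul_div_comm]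

lemma continuousAt_gammaPairReg {X : Type*} [TopologicalSpace X] {x : X} {a z : X → ℂ}
    (hp : ‖p‖ < 1) (hq : ‖q‖ < 1) (ha : ContinuousAt a x) (hz : ContinuousAt z x) (ha0 : a x ≠ 0)
    (ha1 : ‖a x‖ ≤ 1) (hz1 : ‖z x‖ = 1) :
    ContinuousAt (fun x => gammaPairReg p q (a x) (z x)) x := by
  have hz0 := ne_zero_of_norm_eq_one hz1
  exact ((continuousAt_egammaReg hp hq (mul_ne_zero ha0 hz0) (by simpa [hz1])).comp
    (f := fun x => a x * z x) (ha.mul hz)).mul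
    ((continuousAt_egammaReg hp hq (mul_ne_zero ha0 (inv_ne_zero hz0)) (by simpa [hz1])).comp
      (f := fun x => a x * (z x)⁻¹) (ha.mul (hz.inv₀ hz0)))

end RegularizedGamma

section BetaEvaluation

variable {p q u : ℂ} {b : ℝ}

lemma betaNormalizer_eq_prod (p q : ℂ) (t : Fin 6 → ℂ) :
    betaNormalizer p q t =
      egamma (t 0 * t 1) p q * egamma (t 0 * t 2) p q * egamma (t 0 * t 3) p q *
      egamma (t 0 * t 4) p q * egamma (t 0 * t 5) p q * egamma (t 1 * t 2) p q *
      egamma (t 1 * t 3) p q * egamma (t 1 * t 4) p q * egamma (t 1 * t 5) p q *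
      egamma (t 2 * t 3) p q * egamma (t 2 * t 4) p q * egamma (t 2 * t 5) p q *
      egamma (t 3 * t 4) p q * egamma (t 3 * t 5) p q * egamma (t 4 * t 5) p q := by
  have pairs : Finset.powersetCard 2 (Finset.univ : Finset (Fin 6)) =
      {{0, 1}, {0, 2}, {0, 3}, {0, 4}, {0, 5}, {1, 2}, {1, 3}, {1, 4}, {1, 5}, {2, 3}, {2, 4},
        {2, 5}, {3, 4}, {3, 5}, {4, 5}} := by decide
  rw [betaNormalizer, pairs]
  repeat rw [Finset.prod_insert (by decide)]
  simp only [Finset.prod_singleton, mul_assoc, Finset.prod_pair (show (4 : Fin 6) ≠ 5 by decide)]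

/-- A family of balanced parameters for which the contour is pinched at `z = ±I` as `b → 1`. -/
noncomputable def pinchParams (u : ℂ) (b : ℝ) : Fin 6 → ℂ :=
  ![I * b ^ 2, -(I * b ^ 2), u / b, u / b, u / b, u / b]

lemma pinchParams_mem_balancedParams (hub : ‖u‖ < b) (hb : b < 1) :
    pinchParams u b ∈ balancedParams (u ^ 4) := by
  have hb0 : 0 < b := (norm_nonneg u).trans_lt hub
  have hb0' : (b : ℂ) ≠ 0 := ofReal_ne_zero.2 hb0.ne'
  have norm_I_mul : ‖I * (b : ℂ) ^ 2‖ < 1 := by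
    simpa [abs_of_pos hb0] using pow_lt_one₀ hb0.le hb two_ne_zero
  have norm_div : ‖u / b‖ < 1 := by
    simpa [abs_of_pos hb0] using (div_lt_one hb0).2 hub
  refine ⟨fun i => ?_, ?_⟩
  · fin_cases i
    exacts [norm_I_mul, (norm_neg _).trans_lt norm_I_mul, norm_div, norm_div, norm_div, norm_div]
  · simp only [pinchParams, Fin.prod_univ_succ, Matrix.cons_val_zero, Matrix.cons_val_succ,
      Finset.univ_eq_empty, Finset.prod_empty]
    field_simp
    simp [I_sq]

lemma ofReal_poissonKernel_neg (r : ℝ) {z : ℂ} (hz : ‖z‖ = 1) :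
    (poissonKernel 0 (-r) z : ℂ) = (1 - r ^ 2) / ((1 + r * z) * (1 + r * z⁻¹)) := by
  have norm_sq : ((‖z - -r‖ ^ 2 : ℝ) : ℂ) = (1 + r * z) * (1 + r * z⁻¹) := by
    have hz0 := ne_zero_of_norm_eq_one hz
    rw [← normSq_eq_norm_sq, ← mul_conj, map_sub, map_neg, conj_ofReal, ← inv_eq_conj hz]
    field_simp
    ring
  rw [poissonKernel_zero_eq _ hz, ofReal_div, norm_sq]
  simp

/-- The cofactor of the Poisson kernel in the beta integrand at `pinchParams`. -/
noncomputable def pinchCofactor (p q u : ℂ) (b : ℝ) (z : ℂ) : ℂ :=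
  gammaPairReg p q (I * b ^ 2) z * gammaPairReg p q (-(I * b ^ 2)) z *
    gammaPair p q (u / b) z ^ 4 * betaWeight p q z

lemma one_sub_mul_betaIntegrand_pinchParams {z : ℂ} (hp : ‖p‖ < 1) (hq : ‖q‖ < 1) (hb0 : 0 ≤ b)
    (hb : b < 1) (hz : ‖z‖ = 1) : (1 - b ^ 8) * betaIntegrand p q (pinchParams u b) z =
      poissonKernel 0 (-(b ^ 4 : ℝ)) (z ^ 2) • pinchCofactor p q u b z := by
  have norm_lt_one : ‖I * (b : ℂ) ^ 2‖ < 1 := by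
    simpa [abs_of_nonneg hb0] using pow_lt_one₀ hb0 hb two_ne_zero
  have denominators : (1 - I * b ^ 2 * z) * (1 - I * b ^ 2 * z⁻¹) *
      ((1 - -(I * b ^ 2) * z) * (1 - -(I * b ^ 2) * z⁻¹)) =
      (1 + b ^ 4 * z ^ 2) * (1 + b ^ 4 * (z ^ 2)⁻¹) := by
    linear_combination
      (-(b : ℂ) ^ 4 * (z ^ 2 + z⁻¹ ^ 2) + b ^ 8 * (I ^ 2 - 1) * (z * z⁻¹) ^ 2) * I_sq
  rw [betaIntegrand, real_smul, ofReal_poissonKernel_neg _ (by rw [norm_pow, hz, one_pow]),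
    pinchCofactor]
  simp only [Fin.prod_univ_succ, pinchParams, Matrix.cons_val_zero, Matrix.cons_val_succ,
    Finset.univ_eq_empty, Finset.prod_empty]
  rw [gammaPair_eq_gammaPairReg_div hp hq norm_lt_one hz,
    gammaPair_eq_gammaPairReg_div hp hq (by rwa [norm_neg]) hz]
  push_cast
  rw [← denominators]
  simp only [div_eq_mul_inv, mul_inv]
  ring

lemma pinchCofactor_one {z : ℂ} (hp : ‖p‖ < 1) (hq : ‖q‖ < 1) (hz : z ^ 2 = -1) :
    pinchCofactor p q u 1 z = 4 * egammaReg p q 1 ^ 2 * gammaPair p q u I ^ 4 := by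
  have z_eq : z = I ∨ z = -I := sq_eq_sq_iff_eq_or_eq_neg.1 (by rw [hz, I_sq])
  have gammaPair_eq : gammaPair p q u z = gammaPair p q u I := by
    rcases z_eq with rfl | rfl
    · rfl
    · simp only [gammaPair, inv_neg, inv_I, neg_neg, mul_comm]
  have reg_eq : gammaPairReg p q I z * gammaPairReg p q (-I) z =
      egammaReg p q 1 ^ 2 * egammaReg p q (-1) ^ 2 := by
    rcases z_eq with rfl | rfl <;>
    · simp only [gammaPairReg, inv_neg, inv_I, neg_neg, mul_neg, neg_mul, I_mul_I]
      ring
  have weight_eq : betaWeight p q z = theta p (-1) * theta q (-1) := by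
    rw [betaWeight, hz, inv_neg_one]
  simp only [pinchCofactor, ofReal_one, one_pow, mul_one, div_one]
  rw [gammaPair_eq, reg_eq, weight_eq, ← egammaReg_neg_one_sq_mul hp hq]
  ring

lemma continuousAt_pinchCofactor {z : ℂ} (hp : ‖p‖ < 1) (hq : ‖q‖ < 1) (hu : u ≠ 0) (hub : ‖u‖ < b)
    (hb : b ≤ 1) (hz : ‖z‖ = 1) :
    ContinuousAt (Function.uncurry (pinchCofactor p q u)) (b, z) := by
  have hb0 : 0 < b := (norm_nonneg u).trans_lt hub
  have hb0' : (b : ℂ) ≠ 0 := ofReal_ne_zero.2 hb0.ne'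
  have a_ne_zero : I * (b : ℂ) ^ 2 ≠ 0 := mul_ne_zero I_ne_zero (pow_ne_zero 2 hb0')
  have norm_a_le : ‖I * (b : ℂ) ^ 2‖ ≤ 1 := by
    simpa [abs_of_pos hb0] using hb
  have norm_div : ‖u / b‖ < 1 := by simpa [abs_of_pos hb0] using (div_lt_one hb0).2 hub
  have a_cont : ContinuousAt (fun w : ℝ × ℂ => I * (w.1 : ℂ) ^ 2) (b, z) := by fun_prop
  have reg_cont : ContinuousAt (fun w : ℝ × ℂ => gammaPairReg p q (I * w.1 ^ 2) w.2) (b, z) :=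
    continuousAt_gammaPairReg hp hq a_cont continuousAt_snd a_ne_zero norm_a_le hz
  have reg_neg_cont :
      ContinuousAt (fun w : ℝ × ℂ => gammaPairReg p q (-(I * w.1 ^ 2)) w.2) (b, z) :=
    continuousAt_gammaPairReg hp hq a_cont.neg continuousAt_snd (neg_ne_zero.2 a_ne_zero)
      (norm_neg (I * (b : ℂ) ^ 2) ▸ norm_a_le) hz
  have gammaPair_cont : ContinuousAt (fun w : ℝ × ℂ => gammaPair p q (u / w.1) w.2) (b, z) :=
    (differentiableAt_gammaPair (x := ((u / b, z) : ℂ × ℂ)) hp hq differentiableAt_fst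
      differentiableAt_snd (div_ne_zero hu hb0') (ne_zero_of_norm_eq_one hz)
      (by simpa [hz] using norm_div) (by simpa [hz] using norm_div)).continuousAt.comp
        (g := fun w : ℂ × ℂ => gammaPair p q w.1 w.2) (f := fun w : ℝ × ℂ => (u / w.1, w.2))
        (x := (b, z)) (by fun_prop (disch := assumption))
  have weight_cont : ContinuousAt (fun w : ℝ × ℂ => betaWeight p q w.2) (b, z) :=
    (differentiableAt_betaWeight hp hq (ne_zero_of_norm_eq_one hz)).continuousAt.comp
      (g := betaWeight p q) (f := Prod.snd) (x := (b, z)) continuousAt_snd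
  exact ((reg_cont.mul reg_neg_cont).mul (gammaPair_cont.pow 4)).mul weight_cont

lemma tendsto_one_sub_mul_ellipticBeta_pinchParams (hp : ‖p‖ < 1) (hq : ‖q‖ < 1) (hu0 : u ≠ 0)
    (hu : ‖u‖ < 1) :
    Tendsto (fun b : ℝ => (1 - b ^ 8) * ellipticBeta p q (pinchParams u b)) (𝓝[<] 1)
      (𝓝 (4 * egammaReg p q 1 ^ 2 * gammaPair p q u I ^ 4)) := by
  have near_one : ∀ᶠ b : ℝ in 𝓝[<] 1, b ∈ Set.Ioo ‖u‖ 1 := Ioo_mem_nhdsLT hu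
  refine (tendsto_circleAverage_poissonKernel_sq_smul (x₀ := (1 : ℝ)) (r := fun b => b ^ 4)
    (G := pinchCofactor p q u) nhdsWithin_le_nhds ?_ ?_ ?_ ?_
    fun z => pinchCofactor_one hp hq).congr' ?_
  · filter_upwards [near_one] with b hb
    have hb0 := (norm_nonneg u).trans hb.1.le
    exact ⟨pow_nonneg hb0 4, pow_lt_one₀ hb0 hb.2 four_ne_zero⟩
  · exact ((continuous_pow 4).tendsto' 1 1 (one_pow 4)).mono_left nhdsWithin_le_nhds
  · filter_upwards [near_one] with b hb z hz
    exact ((continuousAt_pinchCofactor hp hq hu0 hb.1 hb.2.le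
      (mem_sphere_zero_iff_norm.1 hz)).comp (f := fun z => (b, z))
        (by fun_prop)).continuousWithinAt
  · exact fun z hz => continuousAt_pinchCofactor hp hq hu0 hu le_rfl (mem_sphere_zero_iff_norm.1 hz)
  · filter_upwards [near_one] with b hb
    rw [ellipticBeta, ← circleAverage_const_mul]
    exact circleAverage_congr_of_norm_eq_one fun z hz =>
      (one_sub_mul_betaIntegrand_pinchParams hp hq ((norm_nonneg u).trans hb.1.le) hb.2 hz).symm

lemma one_sub_mul_betaNormalizer_pinchParams (hp : ‖p‖ < 1) (hq : ‖q‖ < 1) (hb0 : 0 < b)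
    (hb : b < 1) : (1 - b ^ 8) * betaNormalizer p q (pinchParams u b) =
      (1 + b ^ 4) * egammaReg p q (b ^ 4) * gammaPair p q (u * b) I ^ 4 *
        egamma ((u / b) ^ 2) p q ^ 6 := by
  have hb0' : (b : ℂ) ≠ 0 := ofReal_ne_zero.2 hb0.ne'
  have pow_lt : b ^ 4 < 1 := pow_lt_one₀ hb0.le hb four_ne_zero
  have pow_ne : (b : ℂ) ^ 4 ≠ 1 := by exact_mod_cast pow_lt.ne
  have product_01 : I * (b : ℂ) ^ 2 * -(I * b ^ 2) = b ^ 4 := by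
    linear_combination (-(b : ℂ) ^ 4) * I_sq
  have product_0j : I * (b : ℂ) ^ 2 * (u / b) = u * b * I := by field_simp
  have product_1j : -(I * (b : ℂ) ^ 2) * (u / b) = u * b * I⁻¹ := by
    rw [inv_I, neg_mul, product_0j, mul_neg]
  have gamma_01 : (1 - (b : ℂ) ^ 8) * egamma (b ^ 4) p q =
      (1 + b ^ 4) * egammaReg p q (b ^ 4) := by
    rw [egamma_eq_egammaReg_div hp hq (by simpa [abs_of_pos hb0] using pow_lt.le) pow_ne]
    field_simp [sub_ne_zero.2 pow_ne.symm]
    ring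
  rw [betaNormalizer_eq_prod]
  simp only [pinchParams, Matrix.cons_val]
  rw [product_01, product_0j, product_1j, ← sq, ← gamma_01, gammaPair]
  ring

lemma tendsto_one_sub_mul_betaNormalizer_pinchParams (hp : ‖p‖ < 1) (hp0 : p ≠ 0) (hq : ‖q‖ < 1)
    (hq0 : q ≠ 0) (hu0 : u ≠ 0) (hu : ‖u‖ < 1) (hpq : u ^ 4 = p * q) :
    Tendsto (fun b : ℝ => (1 - b ^ 8) * betaNormalizer p q (pinchParams u b)) (𝓝[<] 1)
      (𝓝 (2 * egammaReg p q 1 * gammaPair p q u I ^ 4)) := by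
  have norm_sq_lt : ‖u ^ 2‖ < 1 := by simpa using pow_lt_one₀ (norm_nonneg u) hu two_ne_zero
  have egamma_sq : egamma (u ^ 2) p q ^ 2 = 1 := by
    have reflected : p * q / u ^ 2 = u ^ 2 := by rw [← hpq]; field_simp
    have := egamma_mul_reflection hp hq hp0 hq0 norm_sq_lt (by rwa [reflected])
    rwa [reflected, ← sq] at this
  let N : ℝ → ℂ := fun b => (1 + b ^ 4) * egammaReg p q (b ^ 4) * gammaPair p q (u * b) I ^ 4 *
    egamma ((u / b) ^ 2) p q ^ 6
  have N_one : N 1 = 2 * egammaReg p q 1 * gammaPair p q u I ^ 4 := by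
    simp only [N, ofReal_one, one_pow, mul_one, div_one]
    rw [pow_mul (egamma (u ^ 2) p q) 2 3, egamma_sq]
    ring
  have N_cont : ContinuousAt N 1 := by
    have reg_cont : ContinuousAt (fun b : ℝ => egammaReg p q (b ^ 4)) 1 :=
      (continuousAt_egammaReg hp hq (by simp) (by simp)).comp (f := fun b : ℝ => (b : ℂ) ^ 4)
        (by fun_prop)
    have gammaPair_cont : ContinuousAt (fun b : ℝ => gammaPair p q (u * b) I) 1 :=
      (differentiableAt_gammaPair (x := u * (1 : ℝ)) (z := fun _ => I) hp hq differentiableAt_fun_id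
        (differentiableAt_const I) (by simpa) I_ne_zero (by simpa) (by simpa)).continuousAt.comp
          (f := fun b : ℝ => u * b) (by fun_prop)
    have egamma_cont : ContinuousAt (fun b : ℝ => egamma ((u / b) ^ 2) p q) 1 :=
      (differentiableAt_egamma hp hq (by simpa) (by simpa using norm_sq_lt)).continuousAt.comp
        (f := fun b : ℝ => (u / b) ^ 2) (by fun_prop (disch := simp))
    fun_prop
  refine ((N_one ▸ N_cont.tendsto).mono_left nhdsWithin_le_nhds).congr' ?_
  filter_upwards [Ioo_mem_nhdsLT one_pos] with b hb
  exact (one_sub_mul_betaNormalizer_pinchParams hp hq hb.1 hb.2).symm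

lemma gammaPair_ne_zero {a z : ℂ} (hp : ‖p‖ < 1) (hp0 : p ≠ 0) (hq : ‖q‖ < 1) (hq0 : q ≠ 0)
    (ha : ‖a‖ < 1) (hpqa : ‖p * q‖ < ‖a‖) (hz : ‖z‖ = 1) : gammaPair p q a z ≠ 0 := by
  have egamma_ne {w : ℂ} (hw : ‖w‖ = 1) : egamma (a * w) p q ≠ 0 := by
    have norm_eq : ‖a * w‖ = ‖a‖ := by rw [norm_mul, hw, mul_one]
    exact egamma_ne_zero hp hq hp0 hq0 (norm_eq ▸ ha) (norm_eq ▸ hpqa)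
  exact mul_ne_zero (egamma_ne hz) (egamma_ne (by rw [norm_inv, hz, inv_one]))

theorem ellipticBeta_eq {t : Fin 6 → ℂ} (hp : ‖p‖ < 1) (hp0 : p ≠ 0) (hq : ‖q‖ < 1) (hq0 : q ≠ 0)
    (ht : t ∈ balancedParams (p * q)) :
    ellipticBeta p q t = 2 * (qpoch p p * qpoch q q)⁻¹ * betaNormalizer p q t := by
  obtain ⟨u, hu⟩ := IsAlgClosed.exists_pow_nat_eq (p * q) four_pos
  have hu0 : u ≠ 0 := by rintro rfl; simp_all
  have hu4 : ‖u‖ ^ 4 = ‖p * q‖ := by rw [← norm_pow, hu]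
  have norm_lt_one : ‖u‖ < 1 := by
    rw [← pow_lt_one_iff_of_nonneg (norm_nonneg u) four_ne_zero, hu4]
    exact norm_mul_lt_one hp hq
  have norm_mul_lt : ‖p * q‖ < ‖u‖ := hu4 ▸ pow_lt_self_of_lt_one₀ (norm_pos_iff.2 hu0) norm_lt_one
    (by norm_num)
  have proportional : ∀ t' ∈ balancedParams (p * q),
      ellipticBeta p q t' = betaRatio p q t * betaNormalizer p q t' := fun t' ht' => by
    rw [betaRatio_eq_of_mem_balancedParams hp hp0 hq hq0 ht ht', betaRatio,
      div_mul_cancel₀ _ (betaNormalizer_ne_zero hp hp0 hq hq0 ht')]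
  have scaled_lim := (tendsto_one_sub_mul_betaNormalizer_pinchParams hp hp0 hq hq0 hu0 norm_lt_one
    hu).const_mul (betaRatio p q t)
  have limit_eq := tendsto_nhds_unique (scaled_lim.congr' ?_)
    (tendsto_one_sub_mul_ellipticBeta_pinchParams hp hq hu0 norm_lt_one)
  · have reg_ne_zero : egammaReg p q 1 ≠ 0 := by
      rw [egammaReg_one hp hq]
      exact inv_ne_zero (mul_ne_zero (qpoch_ne_zero hp hp) (qpoch_ne_zero hq hq))
    rw [proportional t ht, ← egammaReg_one hp hq]
    congr 1
    apply mul_right_cancel₀ (mul_ne_zero (mul_ne_zero two_ne_zero reg_ne_zero)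
      (pow_ne_zero 4
      (gammaPair_ne_zero hp hp0 hq hq0 norm_lt_one norm_mul_lt norm_I)))
    rw [limit_eq]
    ring
  · filter_upwards [Ioo_mem_nhdsLT norm_lt_one] with b hb
    rw [proportional _ (hu ▸ pinchParams_mem_balancedParams hb.1 hb.2)]
    ring

end BetaEvaluation

section CircleFubini

lemma circleAverage_comm {E : Type*} [NormedAddCommGroup E] [NormedSpace ℝ E] {f : ℂ → ℂ → E}
    {c c' : ℂ} {R R' : ℝ} (hf : ContinuousOn (Function.uncurry f)
      (Metric.sphere c |R| ×ˢ Metric.sphere c' |R'|)) :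
    circleAverage (fun x => circleAverage (f x) c' R') c R =
      circleAverage (fun z => circleAverage (f · z) c R) c' R' := by
  have continuous : Continuous fun u : ℝ × ℝ => f (circleMap c R u.1) (circleMap c' R' u.2) :=
    hf.comp_continuous (f := fun u : ℝ × ℝ => (circleMap c R u.1, circleMap c' R' u.2))
      (by fun_prop) fun u => ⟨circleMap_mem_sphere' c R u.1, circleMap_mem_sphere' c' R' u.2⟩
  simp only [circleAverage, intervalIntegral.integral_smul]
  congr 2
  exact MeasureTheory.intervalIntegral_intervalIntegral_swap
    (continuous.continuousOn.integrableOn_compact (isCompact_uIcc.prod isCompact_uIcc)|>.mono_set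
      (Set.prod_mono Set.uIoc_subset_uIcc Set.uIoc_subset_uIcc))

end CircleFubini

section StarTriangle

variable {p q r s t y w z : ℂ}

lemma gamma4_eq_gammaPair_mul (p q a u v : ℂ) :
    gamma4 p q a u v = gammaPair p q (a * u) v * gammaPair p q (a * u⁻¹) v := by
  simp only [gamma4, gammaPair, mul_assoc]

lemma gamma4_comm (p q a u v : ℂ) : gamma4 p q a u v = gamma4 p q a v u := by
  simp only [gamma4, mul_right_comm a]
  ring

lemma Dfun_eq_gammaPair_mul (p q r s y w : ℂ) :
    Dfun p q r s y w =
      gammaPair p q (r * s⁻¹ * y) w * gammaPair p q (r * s⁻¹ * y⁻¹) w := by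
  simp only [Dfun, gammaPair, mul_assoc]

/-- The kernel `Γ(t x^{±1} z^{±1}) / (Γ(t²) Γ(z^{±2}))` of the elliptic Fourier transform, with the
factor `1 / Γ(z^{±2})` in its analytic form `betaWeight`. -/
noncomputable def ellipticFourierKernel (p q t x z : ℂ) : ℂ :=
  gamma4 p q t x z / egamma (t ^ 2) p q * betaWeight p q z

lemma ellipticFourierKernel_eq {x : ℂ} (hp : ‖p‖ < 1) (hq : ‖q‖ < 1) (hz : ‖z‖ = 1) :
    ellipticFourierKernel p q t x z =
      gamma4 p q t x z / (egamma (t ^ 2) p q * egamma (z ^ 2) p q * egamma (z ^ 2)⁻¹ p q) := by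
  rw [ellipticFourierKernel, betaWeight,
    ← egamma_mul_egamma_inv_of_norm_eq_one hp hq (by rw [norm_pow, hz, one_pow]), mul_assoc,
    ← div_eq_mul_inv, div_div]

/-- The elliptic Fourier transform with parameter `t`. The contour integral against `dz / z` is
written as an average over the unit circle, which absorbs a factor `2πi`. -/
noncomputable def ellipticFourier (p q t : ℂ) (f : ℂ → ℂ) (x : ℂ) : ℂ :=
  qpoch p p * qpoch q q / 2 * circleAverage (fun z => ellipticFourierKernel p q t x z * f z) 0 1

lemma ellipticFourier_eq_integral {x : ℂ} (hp : ‖p‖ < 1) (hq : ‖q‖ < 1) (f : ℂ → ℂ) :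
    ellipticFourier p q t f x = kappa p q * ∫ u in (0 : ℝ)..(2 * π),
      gamma4 p q t x (exp (u * I)) / (egamma (t ^ 2) p q * egamma (exp (u * I) ^ 2) p q *
        egamma ((exp (u * I) ^ 2)⁻¹) p q) * f (exp (u * I)) * I := by
  have integrand (u : ℝ) := ellipticFourierKernel_eq (t := t) (x := x) hp hq
    (norm_exp_ofReal_mul_I u)
  have constant : qpoch p p * qpoch q q / 2 * ((2 * π)⁻¹ : ℝ) = kappa p q * I := by
    rw [kappa]
    push_cast
    field_simp
    norm_num
  simp only [ellipticFourier, circleAverage, circleMap_zero, ofReal_one, one_mul, integrand,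
    intervalIntegral.integral_mul_const, real_smul]
  rw [← mul_assoc, constant, mul_assoc, mul_comm I]

lemma ellipticFourier_congr {f g : ℂ → ℂ} (h : ∀ z : ℂ, ‖z‖ = 1 → f z = g z) :
    ellipticFourier p q t f = ellipticFourier p q t g := by
  funext x
  rw [ellipticFourier, ellipticFourier,
    circleAverage_congr_of_norm_eq_one fun z hz => by rw [h z hz]]

lemma differentiableAt_ellipticFourierKernel {x : ℂ} (hp : ‖p‖ < 1) (hq : ‖q‖ < 1) (ht0 : t ≠ 0)
    (hx0 : x ≠ 0) (htx : ‖t * x‖ < 1) (htx' : ‖t * x⁻¹‖ < 1) (hz : ‖z‖ = 1) :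
    DifferentiableAt ℂ (Function.uncurry (ellipticFourierKernel p q t)) (x, z) := by
  have hz0 := ne_zero_of_norm_eq_one hz
  have gammaPair_diff {a : ℂ × ℂ → ℂ} (ha : DifferentiableAt ℂ a (x, z)) (ha0 : a (x, z) ≠ 0)
      (ha1 : ‖a (x, z)‖ < 1) : DifferentiableAt ℂ (fun v => gammaPair p q (a v) v.2) (x, z) :=
    differentiableAt_gammaPair hp hq ha differentiableAt_snd ha0 hz0 (by simpa [hz] using ha1)
      (by simpa [hz] using ha1)
  have weight_diff : DifferentiableAt ℂ (fun v : ℂ × ℂ => betaWeight p q v.2) (x, z) :=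
    (differentiableAt_betaWeight hp hq hz0).fun_comp' (x, z) differentiableAt_snd
  simp only [Function.uncurry_def, ellipticFourierKernel, gamma4_eq_gammaPair_mul]
  exact (((gammaPair_diff (a := fun v => t * v.1) (by fun_prop) (mul_ne_zero ht0 hx0) htx).fun_mul
    (gammaPair_diff (a := fun v => t * v.1⁻¹) (by fun_prop (disch := exact hx0))
      (mul_ne_zero ht0 (inv_ne_zero hx0)) htx')).mul_const
        (egamma (t ^ 2) p q)⁻¹).mul weight_diff

/-- The parameters at which the elliptic beta integral becomes the star-triangle relation. -/
noncomputable def starTriangleParams (r s t y w z : ℂ) : Fin 6 → ℂ :=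
  ![s * w, s * w⁻¹, r * (s * t)⁻¹ * y, r * (s * t)⁻¹ * y⁻¹, t * z, t * z⁻¹]

lemma starTriangleParams_mem_balancedParams (hs : s ≠ 0) (ht : t ≠ 0) (hy : y ≠ 0) (hw : w ≠ 0)
    (ht1 : ‖t‖ < 1) (hy1 : ‖r * (s * t)⁻¹ * y‖ < 1) (hy1' : ‖r * (s * t)⁻¹ * y⁻¹‖ < 1)
    (hw1 : ‖s * w‖ < 1) (hw1' : ‖s * w⁻¹‖ < 1) (hz : ‖z‖ = 1) :
    starTriangleParams r s t y w z ∈ balancedParams (r ^ 2) := by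
  have hz0 := ne_zero_of_norm_eq_one hz
  refine ⟨fun i => ?_, ?_⟩
  · fin_cases i
    exacts [hw1, hw1', hy1, hy1', (by simpa [starTriangleParams, hz] using ht1),
      (by simpa [starTriangleParams, hz] using ht1)]
  · simp only [starTriangleParams, Fin.prod_univ_succ, Matrix.cons_val_zero, Matrix.cons_val_succ,
      Finset.univ_eq_empty, Finset.prod_empty]
    field_simp

lemma ellipticFourierKernel_mul_mul (p q r s t y w z x : ℂ) :
    ellipticFourierKernel p q s w x *
        (Dfun p q r (s * t) y x * ellipticFourierKernel p q t x z) =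
      betaWeight p q z / (egamma (s ^ 2) p q * egamma (t ^ 2) p q) *
        betaIntegrand p q (starTriangleParams r s t y w z) x := by
  rw [ellipticFourierKernel, ellipticFourierKernel, gamma4_comm p q t, gamma4_eq_gammaPair_mul,
    gamma4_eq_gammaPair_mul, Dfun_eq_gammaPair_mul, betaIntegrand]
  simp only [starTriangleParams, Fin.prod_univ_succ, Matrix.cons_val_zero, Matrix.cons_val_succ,
    Finset.univ_eq_empty, Finset.prod_empty]
  ring

lemma betaNormalizer_starTriangleParams (hr : r ^ 2 = p * q) (hs : s ≠ 0) (ht : t ≠ 0)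
    (hy : y ≠ 0) (hw : w ≠ 0) (hz : z ≠ 0) :
    betaNormalizer p q (starTriangleParams r s t y w z) =
      egamma (s ^ 2) p q * egamma (t ^ 2) p q * egamma (p * q / (s ^ 2 * t ^ 2)) p q *
        Dfun p q r t y w * gamma4 p q (s * t) w z * Dfun p q r s y z := by
  have cancel_w : s * w * (s * w⁻¹) = s ^ 2 := by field_simp
  have cancel_y : r * (s * t)⁻¹ * y * (r * (s * t)⁻¹ * y⁻¹) = p * q / (s ^ 2 * t ^ 2) := by
    rw [← hr]; field_simp
  have cancel_z : t * z * (t * z⁻¹) = t ^ 2 := by field_simp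
  have cancel_s (W Y : ℂ) : s * W * (r * (s * t)⁻¹ * Y) = r * t⁻¹ * Y * W := by field_simp
  have cancel_t (Y Z : ℂ) : r * (s * t)⁻¹ * Y * (t * Z) = r * s⁻¹ * Y * Z := by field_simp
  have regroup (W Z : ℂ) : s * W * (t * Z) = s * t * W * Z := by ring
  rw [betaNormalizer_eq_prod]
  simp only [starTriangleParams, Matrix.cons_val, cancel_w, cancel_y, cancel_z, cancel_s, cancel_t,
    regroup, Dfun, gamma4]
  ring

lemma egamma_mul_egamma_of_mul_eq {a b : ℂ} (hp : ‖p‖ < 1) (hp0 : p ≠ 0) (hq : ‖q‖ < 1)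
    (hq0 : q ≠ 0) (ha : ‖a‖ < 1) (hb : ‖b‖ < 1) (hab : a * b = p * q) :
    egamma a p q * egamma b p q = 1 := by
  have ha0 : a ≠ 0 := left_ne_zero_of_mul (hab ▸ mul_ne_zero hp0 hq0)
  obtain rfl : b = p * q / a := eq_div_of_mul_eq ha0 (by rw [mul_comm, hab])
  exact egamma_mul_reflection hp hq hp0 hq0 ha hb

lemma norm_sq_lt_one_of_norm_mul_lt_one {a b : ℂ} (hb : b ≠ 0) (h : ‖a * b‖ < 1)
    (h' : ‖a * b⁻¹‖ < 1) : ‖a ^ 2‖ < 1 := by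
  rw [show a ^ 2 = a * b * (a * b⁻¹) by field_simp]
  exact norm_mul_lt_one h h'

lemma Dfun_mul_Dfun_inv (hp : ‖p‖ < 1) (hp0 : p ≠ 0) (hq : ‖q‖ < 1) (hq0 : q ≠ 0)
    (hr : r ^ 2 = p * q) (ht : t ≠ 0) (hy : y ≠ 0) (hw : w ≠ 0) (ht1 : ‖t‖ < 1)
    (hD : ∀ Y ∈ ({y, y⁻¹} : Set ℂ), ∀ W ∈ ({w, w⁻¹} : Set ℂ), ‖r * t⁻¹ * Y * W‖ < 1) :
    Dfun p q r t y w * Dfun p q r t⁻¹ y w = 1 := by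
  have norm_lt {Y W : ℂ} (h : ‖r * t⁻¹ * Y * W‖ < 1) : ‖r * t * Y * W‖ < 1 := by
    rw [show r * t * Y * W = t * t * (r * t⁻¹ * Y * W) by field_simp]
    exact norm_mul_lt_one (norm_mul_lt_one ht1 ht1) h
  have reflect {Y W : ℂ} (hY : Y ≠ 0) (hW : W ≠ 0) (h : ‖r * t⁻¹ * Y * W‖ < 1)
      (h' : ‖r * t⁻¹ * Y⁻¹ * W⁻¹‖ < 1) :
      egamma (r * t⁻¹ * Y * W) p q * egamma (r * t * Y⁻¹ * W⁻¹) p q = 1 :=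
    egamma_mul_egamma_of_mul_eq hp hp0 hq hq0 h (norm_lt h') (by rw [← hr]; field_simp)
  have hyw := hD y (by simp) w (by simp)
  have hyw' := hD y (by simp) w⁻¹ (by simp)
  have hy'w := hD y⁻¹ (by simp) w (by simp)
  have hy'w' := hD y⁻¹ (by simp) w⁻¹ (by simp)
  calc Dfun p q r t y w * Dfun p q r t⁻¹ y w
      = egamma (r * t⁻¹ * y * w) p q * egamma (r * t * y⁻¹ * w⁻¹) p q *
          (egamma (r * t⁻¹ * y * w⁻¹) p q * egamma (r * t * y⁻¹ * w⁻¹⁻¹) p q) *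
          (egamma (r * t⁻¹ * y⁻¹ * w) p q * egamma (r * t * y⁻¹⁻¹ * w⁻¹) p q) *
          (egamma (r * t⁻¹ * y⁻¹ * w⁻¹) p q * egamma (r * t * y⁻¹⁻¹ * w⁻¹⁻¹) p q) := by
        simp only [Dfun, inv_inv]
        ring
    _ = 1 := by
        rw [reflect hy hw hyw hy'w', reflect hy (inv_ne_zero hw) hyw' (by rwa [inv_inv]),
          reflect (inv_ne_zero hy) hw hy'w (by rwa [inv_inv]),
          reflect (inv_ne_zero hy) (inv_ne_zero hw) hy'w' (by rwa [inv_inv, inv_inv])]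
        norm_num

theorem Dfun_mul_ellipticFourier_Dfun_mul_kernel (hp : ‖p‖ < 1) (hp0 : p ≠ 0) (hq : ‖q‖ < 1)
    (hq0 : q ≠ 0) (hr : r ^ 2 = p * q) (hs : s ≠ 0) (ht : t ≠ 0) (hy : y ≠ 0) (hw : w ≠ 0)
    (ht1 : ‖t‖ < 1) (hy1 : ‖r * (s * t)⁻¹ * y‖ < 1) (hy1' : ‖r * (s * t)⁻¹ * y⁻¹‖ < 1)
    (hw1 : ‖s * w‖ < 1) (hw1' : ‖s * w⁻¹‖ < 1) (hz : ‖z‖ = 1) :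
    Dfun p q r t⁻¹ y w * ellipticFourier p q s
        (fun x => Dfun p q r (s * t) y x * ellipticFourierKernel p q t x z) w =
      ellipticFourierKernel p q (s * t) w z * Dfun p q r s y z := by
  have hz0 := ne_zero_of_norm_eq_one hz
  have params_mem := hr ▸ starTriangleParams_mem_balancedParams hs ht hy hw ht1 hy1 hy1' hw1 hw1' hz
  have normalizer_ne_zero := betaNormalizer_ne_zero hp hp0 hq hq0 params_mem
  have normalizer_eq := betaNormalizer_starTriangleParams hr hs ht hy hw hz0
  have D_reflect : Dfun p q r t y w * Dfun p q r t⁻¹ y w = 1 := by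
    refine Dfun_mul_Dfun_inv hp hp0 hq hq0 hr ht hy hw ht1 fun Y hY W hW => ?_
    have norm_Y : ‖r * (s * t)⁻¹ * Y‖ < 1 := by rcases hY with rfl | rfl <;> assumption
    have norm_W : ‖s * W‖ < 1 := by rcases hW with rfl | rfl <;> assumption
    rw [show r * t⁻¹ * Y * W = s * W * (r * (s * t)⁻¹ * Y) by field_simp]
    exact norm_mul_lt_one norm_W norm_Y
  have st_reflect : egamma (p * q / (s ^ 2 * t ^ 2)) p q * egamma ((s * t) ^ 2) p q = 1 := by
    have norm_s_sq := norm_sq_lt_one_of_norm_mul_lt_one hw hw1 hw1'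
    have norm_rst_sq := norm_sq_lt_one_of_norm_mul_lt_one hy hy1 hy1'
    rw [mul_pow, inv_pow, hr, mul_pow, ← div_eq_mul_inv] at norm_rst_sq
    refine egamma_mul_egamma_of_mul_eq hp hp0 hq hq0 norm_rst_sq ?_ (by field_simp)
    rw [mul_pow]
    exact norm_mul_lt_one norm_s_sq (sq t ▸ norm_mul_lt_one ht1 ht1)
  have qpoch_p := qpoch_ne_zero hp hp
  have qpoch_q := qpoch_ne_zero hq hq
  rw [normalizer_eq] at normalizer_ne_zero
  simp only [mul_ne_zero_iff] at normalizer_ne_zero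
  obtain ⟨⟨⟨⟨⟨hs_ne, ht_ne⟩, -⟩, -⟩, -⟩, -⟩ := normalizer_ne_zero
  simp only [ellipticFourier, ellipticFourierKernel_mul_mul, circleAverage_const_mul]
  rw [← ellipticBeta, ellipticBeta_eq hp hp0 hq hq0 params_mem, normalizer_eq,
    ellipticFourierKernel, eq_inv_of_mul_eq_one_left st_reflect, mul_pow]
  generalize Dfun p q r t⁻¹ y w = D_inv at D_reflect ⊢
  field_simp
  linear_combination
    gamma4 p q (s * t) w z * Dfun p q r s y z * betaWeight p q z / egamma (s ^ 2 * t ^ 2) p q *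
      D_reflect

lemma continuousOn_ellipticFourierKernel_mul_mul {α : ℂ → ℂ} (hp : ‖p‖ < 1) (hq : ‖q‖ < 1)
    (hs : s ≠ 0) (ht : t ≠ 0) (hr : r ≠ 0) (hy : y ≠ 0) (hw : w ≠ 0) (ht1 : ‖t‖ < 1)
    (hy1 : ‖r * (s * t)⁻¹ * y‖ < 1) (hy1' : ‖r * (s * t)⁻¹ * y⁻¹‖ < 1) (hw1 : ‖s * w‖ < 1)
    (hw1' : ‖s * w⁻¹‖ < 1) (hα : ContinuousOn α (Metric.sphere 0 1)) :
    ContinuousOn (fun v : ℂ × ℂ => ellipticFourierKernel p q s w v.1 *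
        (Dfun p q r (s * t) y v.1 * ellipticFourierKernel p q t v.1 v.2) * α v.2)
      (Metric.sphere 0 1 ×ˢ Metric.sphere 0 1) := by
  refine ContinuousOn.mul (fun v hv => ContinuousAt.continuousWithinAt ?_)
    (hα.comp continuousOn_snd fun v hv => hv.2)
  obtain ⟨hx, hz⟩ : ‖v.1‖ = 1 ∧ ‖v.2‖ = 1 := by simpa using hv
  have hx0 := ne_zero_of_norm_eq_one hx
  have outer_kernel : ContinuousAt (fun v : ℂ × ℂ => ellipticFourierKernel p q s w v.1) v :=
    (differentiableAt_ellipticFourierKernel hp hq hs hw hw1 hw1' hx).continuousAt.comp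
      (f := fun v : ℂ × ℂ => (w, v.1)) (by fun_prop)
  have inner_kernel := (differentiableAt_ellipticFourierKernel hp hq ht hx0
    (by simpa [hx] using ht1) (by simpa [hx] using ht1) hz).continuousAt
  have gammaPair_cont {a : ℂ} (ha0 : a ≠ 0) (ha1 : ‖a‖ < 1) :
      ContinuousAt (fun v : ℂ × ℂ => gammaPair p q a v.1) v :=
    (differentiableAt_gammaPair (a := fun _ => a) hp hq (differentiableAt_const a)
      differentiableAt_fst ha0 hx0 (by simpa [hx] using ha1) (by simpa [hx] using ha1)).continuousAt
  have st_ne_zero := mul_ne_zero hr (inv_ne_zero (mul_ne_zero hs ht))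
  simp only [Dfun_eq_gammaPair_mul]
  exact outer_kernel.mul (((gammaPair_cont (mul_ne_zero st_ne_zero hy) hy1).mul
    (gammaPair_cont (mul_ne_zero st_ne_zero (inv_ne_zero hy)) hy1')).mul inner_kernel)

theorem Dfun_mul_ellipticFourier_Dfun_mul_ellipticFourier {α : ℂ → ℂ} (hp : ‖p‖ < 1) (hp0 : p ≠ 0)
    (hq : ‖q‖ < 1) (hq0 : q ≠ 0) (hr : r ^ 2 = p * q) (hs : s ≠ 0) (ht : t ≠ 0) (hy : y ≠ 0)
    (hw : w ≠ 0) (ht1 : ‖t‖ < 1) (hy1 : ‖r * (s * t)⁻¹ * y‖ < 1)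
    (hy1' : ‖r * (s * t)⁻¹ * y⁻¹‖ < 1) (hw1 : ‖s * w‖ < 1) (hw1' : ‖s * w⁻¹‖ < 1)
    (hα : ContinuousOn α (Metric.sphere 0 1)) :
    Dfun p q r t⁻¹ y w * ellipticFourier p q s
        (fun x => Dfun p q r (s * t) y x * ellipticFourier p q t α x) w =
      ellipticFourier p q (s * t) (fun z => Dfun p q r s y z * α z) w := by
  have hr0 : r ≠ 0 := fun h => mul_ne_zero hp0 hq0 (by rw [← hr, h, zero_pow two_ne_zero])
  set c := qpoch p p * qpoch q q / 2
  let K (x z : ℂ) := ellipticFourierKernel p q s w x *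
    (Dfun p q r (s * t) y x * ellipticFourierKernel p q t x z)
  have K_cont : ContinuousOn (Function.uncurry fun x z => K x z * α z)
      (Metric.sphere 0 |1| ×ˢ Metric.sphere 0 |1|) := by
    rw [abs_one]
    exact continuousOn_ellipticFourierKernel_mul_mul hp hq hs ht hr0 hy hw ht1 hy1 hy1' hw1 hw1' hα
  have star_triangle (z : ℂ) (hz : ‖z‖ = 1) : Dfun p q r t⁻¹ y w * (c * circleAverage (K · z) 0 1) =
      ellipticFourierKernel p q (s * t) w z * Dfun p q r s y z :=
    Dfun_mul_ellipticFourier_Dfun_mul_kernel hp hp0 hq hq0 hr hs ht hy hw ht1 hy1 hy1' hw1 hw1' hz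
  calc Dfun p q r t⁻¹ y w * ellipticFourier p q s
          (fun x => Dfun p q r (s * t) y x * ellipticFourier p q t α x) w
      = Dfun p q r t⁻¹ y w * c *
          (c * circleAverage (fun x => circleAverage (fun z => K x z * α z) 0 1) 0 1) := by
        simp only [ellipticFourier, c, K, ← circleAverage_const_mul]
        ring_nf
    _ = c * circleAverage
          (fun z => Dfun p q r t⁻¹ y w * (c * circleAverage (K · z) 0 1) * α z) 0 1 := by
        rw [circleAverage_comm K_cont]
        simp only [mul_comm _ (α _), circleAverage_const_mul]
        simp only [← circleAverage_const_mul]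
        ring_nf
    _ = ellipticFourier p q (s * t) (fun z => Dfun p q r s y z * α z) w := by
        rw [ellipticFourier, circleAverage_congr_of_norm_eq_one fun z hz => by
          rw [star_triangle z hz, mul_assoc]]

end StarTriangle

theorem integral_bailey_lemma (p q r : ℂ) (hp0 : 0 < ‖p‖) (hp1 : ‖p‖ < 1)
    (hq0 : 0 < ‖q‖) (hq1 : ‖q‖ < 1) (hr : r ^ 2 = p * q)
    (s t y w : ℂ) (hs : s ≠ 0) (ht : t ≠ 0) (hy : y ≠ 0) (hw : w ≠ 0)
    (h1 : ‖t‖ < 1) (h2 : ‖s‖ < 1)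
    (h3 : ‖r * (s * t)⁻¹ * y‖ < 1) (h4 : ‖r * (s * t)⁻¹ * y⁻¹‖ < 1)
    (h5 : ‖s * w‖ < 1) (h6 : ‖s * w⁻¹‖ < 1) (h7 : ‖s * t * w‖ < 1) (h8 : ‖s * t * w⁻¹‖ < 1)
    (α : ℂ → ℂ) (hα : ContinuousOn α (Metric.sphere (0 : ℂ) 1))
    (β : ℂ → ℂ)
    (hβ : ∀ x : ℂ, ‖x‖ = 1 →
      β x = kappa p q * ∫ u in (0:ℝ)..(2 * Real.pi),
        gamma4 p q t x (Complex.exp (u * Complex.I)) /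
            (egamma (t ^ 2) p q * egamma (Complex.exp (u * Complex.I) ^ 2) p q *
              egamma ((Complex.exp (u * Complex.I) ^ 2)⁻¹) p q) *
          α (Complex.exp (u * Complex.I)) * Complex.I)
    (α' : ℂ → ℂ) (hα' : ∀ z : ℂ, α' z = Dfun p q r s y z * α z) :
    (Dfun p q r t⁻¹ y w *
        (kappa p q * ∫ u in (0:ℝ)..(2 * Real.pi),
          gamma4 p q s w (Complex.exp (u * Complex.I)) /
              (egamma (s ^ 2) p q * egamma (Complex.exp (u * Complex.I) ^ 2) p q *
                egamma ((Complex.exp (u * Complex.I) ^ 2)⁻¹) p q) *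
            Dfun p q r (s * t) y (Complex.exp (u * Complex.I)) *
            β (Complex.exp (u * Complex.I)) * Complex.I))
      = kappa p q * ∫ u in (0:ℝ)..(2 * Real.pi),
          gamma4 p q (s * t) w (Complex.exp (u * Complex.I)) /
              (egamma (s ^ 2 * t ^ 2) p q * egamma (Complex.exp (u * Complex.I) ^ 2) p q *
                egamma ((Complex.exp (u * Complex.I) ^ 2)⁻¹) p q) *
            α' (Complex.exp (u * Complex.I)) * Complex.I := by
  have β_eq (x : ℂ) (hx : ‖x‖ = 1) : β x = ellipticFourier p q t α x :=
    (hβ x hx).trans (ellipticFourier_eq_integral hp1 hq1 α).symm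
  have bailey := Dfun_mul_ellipticFourier_Dfun_mul_ellipticFourier hp1 (norm_pos_iff.1 hp0) hq1
    (norm_pos_iff.1 hq0) hr hs ht hy hw h1 h3 h4 h5 h6 hα
  rw [← ellipticFourier_congr fun x hx => congrArg (Dfun p q r (s * t) y x * ·) (β_eq x hx),
    ellipticFourier_eq_integral hp1 hq1, ellipticFourier_eq_integral hp1 hq1] at bailey
  simpa only [mul_pow, hα', mul_assoc] using bailey
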